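/- There exists an absolute constant C such that for every prime p, all finite sets A, B ⊆ F_p and every finite set L of lines y = ax + b in F_p² with a ≠ 0, the number of incidences satisfies I(A×B, L) ≤ C·max{ |B|^(1/2)·|L|·(max{1, |A|²/p})^(1/2), |B|^(1/2)·|A|^(5/8)·E(L)^(1/8)·|L|^(1/2) }. -/

import Mathlib

/-- Composition in `Aff(F_p)` of lines `(a,b)`, acting as `x ↦ ax + b`:
`(a,b)∘(c,d) = (ac, ad + b)`. -/
def acomp (p : ℕ) (l m : ZMod p × ZMod p) : ZMod p × ZMod p :=
  (l.1 * m.1, l.1 * m.2 + l.2)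

/-- Inverse in `Aff(F_p)` of a line `(a,b)` with `a ≠ 0`. -/
def ainv (p : ℕ) (l : ZMod p × ZMod p) : ZMod p × ZMod p := (l.1⁻¹, -(l.1⁻¹ * l.2))

/-- The energy of a set of non-vertical lines regarded as elements of `Aff(F_p)`:
`E(L) = #{(l₁,l₂,l₁',l₂') ∈ L⁴ : l₁⁻¹∘l₂ = l₁'⁻¹∘l₂'}`. -/
noncomputable def affEnergy (p : ℕ) (L : Finset (ZMod p × ZMod p)) : ℕ :=
  Set.ncard {q : (ZMod p × ZMod p) × (ZMod p × ZMod p) × (ZMod p × ZMod p) ×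
      (ZMod p × ZMod p) |
    q.1 ∈ L ∧ q.2.1 ∈ L ∧ q.2.2.1 ∈ L ∧ q.2.2.2 ∈ L ∧
    acomp p (ainv p q.1) q.2.1 = acomp p (ainv p q.2.2.1) q.2.2.2}

/-- The number of incidences between the grid `A×B` and the set of lines `L`. -/
noncomputable def inc (p : ℕ) (A B : Finset (ZMod p)) (L : Finset (ZMod p × ZMod p)) : ℕ :=
  Set.ncard {ql : (ZMod p × ZMod p) × ZMod p × ZMod p |
    ql.1.1 ∈ A ∧ ql.1.2 ∈ B ∧ ql.2 ∈ L ∧ ql.1.2 = ql.2.1 * ql.1.1 + ql.2.2}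

/-!
Write `i_A(g)` for the number of `a ∈ A` with `g(a) ∈ A`. By Cauchy–Schwarz over `B`,
`I(A×B, L)² ≤ |B| · ∑ i_A(l₁⁻¹ ∘ l₂)`, the sum being over `(l₁, l₂) ∈ L²`. There are `O(|A|⁵ / k⁴)`
maps `g` with `i_A(g) ≥ k`, provided `k ≥ 2` and `k ≥ 2|A|² / p`. A second application of
Cauchy–Schwarz, with the energy, bounds the number of pairs with `i_A(l₁⁻¹ ∘ l₂) ≥ k` by
`O((|A|⁵ E(L))^{1/2} / k²)`, and summing over `k` gives the theorem.

Let `M` be the set of `k`-rich `g`. If `|A||M| ≥ p²`, the bound on `|M|` follows from the variance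
of `i_A` over all affine maps. Otherwise a further Cauchy–Schwarz reduces it to counting the
quadruples `(a, g, a', g')` in `(A × M)²` with `g'(a) = g(a')`. Over the field `F_p(θ)`, such a
quadruple is an intersection of a red line, attached to `(a, g)` and contained in a plane
`s = const`, with a blue line, attached to `(a', g')` and contained in a plane `t = const`, of the
three-dimensional space with coordinates `(x, s, t)`. If two families of about `n` lines have many
more than `n^{3/2}` intersections, a polynomial of degree `O(n^{1/2})` vanishing on a sample of the
red lines vanishes on most lines; it then has an irreducible factor ruled by red lines, which
forces many blue lines to have collinear parameters. Richness limits such collinearity.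
-/

namespace EnergyIncidence

open MvPolynomial
open scoped Polynomial

section RestrictLine

variable {σ K : Type*} [CommRing K]

/-- The restriction of a polynomial to the parametrised line `τ ↦ a + τ v`. -/
noncomputable def restrictLine (a v : σ → K) : MvPolynomial σ K →ₐ[K] K[X] :=
  aeval fun i => Polynomial.C (v i) * Polynomial.X + Polynomial.C (a i)

lemma restrictLine_X (a v : σ → K) (i : σ) :
    restrictLine a v (X i) = Polynomial.C (v i) * Polynomial.X + Polynomial.C (a i) :=
  aeval_X _ i

lemma natDegree_restrictLine_le (a v : σ → K) (f : MvPolynomial σ K) :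
    (restrictLine a v f).natDegree ≤ f.totalDegree := by
  simpa [restrictLine] using aeval_natDegree_le f le_rfl _ fun i =>
    Polynomial.natDegree_linear_le (a := v i) (b := a i)

lemma eval_restrictLine (a v : σ → K) (f : MvPolynomial σ K) (τ : K) :
    (restrictLine a v f).eval τ = eval (fun i => v i * τ + a i) f := by
  rw [← Polynomial.coe_aeval_eq_eval, ← aeval_eq_eval, ← AlgHom.comp_apply]
  congr 1
  exact algHom_ext fun i => by simp [restrictLine]

lemma derivative_restrictLine [Fintype σ] (a v : σ → K) (f : MvPolynomial σ K) :
    Polynomial.derivative (restrictLine a v f) =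
      ∑ i, Polynomial.C (v i) * restrictLine a v (pderiv i f) := by
  classical
  induction f using MvPolynomial.induction_on with
  | C c => simp [restrictLine]
  | add f g hf hg => simp [hf, hg, mul_add, Finset.sum_add_distrib]
  | mul_X f i hf =>
    have hX : Polynomial.derivative (restrictLine a v (X i)) = Polynomial.C (v i) := by
      simp [restrictLine_X]
    simp only [map_mul, Derivation.leibniz, Polynomial.derivative_mul, hf, hX, pderiv_X,
      smul_eq_mul, map_add, mul_add, Finset.sum_add_distrib, Finset.sum_mul]
    rw [add_comm]
    congr 1
    · rw [Finset.sum_eq_single i (fun j _ hj => by simp [Pi.single_eq_of_ne' hj]) (by simp)]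
      simp [mul_comm]
    · exact Finset.sum_congr rfl fun j _ => by ring

lemma restrictLine_eq_eval₂_finSuccEquiv {n : ℕ} (a v : Fin (n + 1) → K)
    (f : MvPolynomial (Fin (n + 1)) K) :
    restrictLine a v f = Polynomial.eval₂
      (restrictLine (fun i : Fin n => a i.succ) (fun i : Fin n => v i.succ) : _ →+* K[X])
      (Polynomial.C (v 0) * Polynomial.X + Polynomial.C (a 0)) (finSuccEquiv K n f) := by
  induction f using MvPolynomial.induction_on with
  | C c => simp [finSuccEquiv_apply]
  | add f g hf hg => simp [hf, hg, Polynomial.eval₂_add]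
  | mul_X f i hf =>
    rw [map_mul, map_mul, Polynomial.eval₂_mul, hf, restrictLine_X]
    congr 1
    cases i using Fin.cases with
    | zero => rw [finSuccEquiv_X_zero, Polynomial.eval₂_X]
    | succ i => rw [finSuccEquiv_X_succ, Polynomial.eval₂_C, RingHom.coe_coe, restrictLine_X]

end RestrictLine

section SlopedLine

variable {K : Type*} [CommRing K]

/-- The parameters of a line in the space with coordinates `(x, s, t)`. As a *red* line they
describe `s = level, x = slope * t + intercept`, as a *blue* line
`t = level, x = slope * s + intercept`. -/
structure SlopedLine (K : Type*) where
  slope : K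
  intercept : K
  level : K

/-- The restriction of a polynomial in `(x, s, t)` to a red line, parametrised by `t`. -/
noncomputable def restrictRed (r : SlopedLine K) : MvPolynomial (Fin 3) K →ₐ[K] K[X] :=
  restrictLine ![r.intercept, r.level, 0] ![r.slope, 0, 1]

/-- The restriction of a polynomial in `(x, s, t)` to a blue line, parametrised by `s`. -/
noncomputable def restrictBlue (b : SlopedLine K) : MvPolynomial (Fin 3) K →ₐ[K] K[X] :=
  restrictLine ![b.intercept, 0, b.level] ![b.slope, 1, 0]

/-- The red line `r` and the blue line `b` have a common point, necessarily the one with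
`s = r.level` and `t = b.level`. -/
def Meets (r b : SlopedLine K) : Prop :=
  r.slope * b.level + r.intercept = b.slope * r.level + b.intercept

lemma natDegree_restrictRed_le (r : SlopedLine K) (f : MvPolynomial (Fin 3) K) :
    (restrictRed r f).natDegree ≤ f.totalDegree :=
  natDegree_restrictLine_le _ _ f

lemma natDegree_restrictBlue_le (b : SlopedLine K) (f : MvPolynomial (Fin 3) K) :
    (restrictBlue b f).natDegree ≤ f.totalDegree :=
  natDegree_restrictLine_le _ _ f

lemma Meets.eval_restrictRed_eq {r b : SlopedLine K} (h : Meets r b)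
    (f : MvPolynomial (Fin 3) K) :
    (restrictRed r f).eval b.level = (restrictBlue b f).eval r.level := by
  rw [restrictRed, restrictBlue, eval_restrictLine, eval_restrictLine]
  congr 2
  funext i
  rw [Meets] at h
  fin_cases i <;> simp [h]

end SlopedLine

section Bezout

variable {K : Type*} [Field K]

lemma card_le_totalDegree_of_restrictLine_vertical_eq_zero {f : MvPolynomial (Fin 2) K}
    (hf : f ≠ 0) (W : Finset K) (hW : ∀ w ∈ W, restrictLine ![w, 0] ![0, 1] f = 0) :
    W.card ≤ f.totalDegree := by
  classical
  have hinj : Function.Injective (restrictLine (fun _ : Fin 1 => (0 : K)) fun _ => 1) := by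
    have := (algebraicIndependent_unique_type_iff (R := K)
      (x := fun _ : Fin 1 => (Polynomial.X : K[X]))).2 (Polynomial.transcendental_X K)
    simpa [AlgebraicIndependent, restrictLine] using this
  have hroot : W.image C ⊆ (finSuccEquiv K 1 f).roots.toFinset := by
    intro g hg
    obtain ⟨w, hw, rfl⟩ := Finset.mem_image.1 hg
    rw [Multiset.mem_toFinset, Polynomial.mem_roots (by simpa using hf), Polynomial.IsRoot.def]
    refine hinj ?_
    have h := hW w hw
    rw [restrictLine_eq_eval₂_finSuccEquiv] at h
    have ha : (fun i : Fin 1 => ![w, 0] i.succ) = fun _ => 0 := by ext; simp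
    have hv : (fun i : Fin 1 => ![(0 : K), 1] i.succ) = fun _ => 1 := by ext; simp
    rw [ha, hv] at h
    rw [map_zero, ← h, ← Polynomial.eval₂_id, ← AlgHom.coe_toRingHom, Polynomial.hom_eval₂]
    simp [MvPolynomial.algHom_C]
  calc W.card = (W.image (C : K → MvPolynomial (Fin 1) K)).card :=
        (Finset.card_image_of_injective _ (C_injective _ _)).symm
    _ ≤ (finSuccEquiv K 1 f).roots.toFinset.card := Finset.card_le_card hroot
    _ ≤ (finSuccEquiv K 1 f).natDegree :=
        (Multiset.toFinset_card_le _).trans (Polynomial.card_roots' _)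
    _ ≤ f.totalDegree := by
        rw [natDegree_finSuccEquiv]
        exact degreeOf_le_totalDegree _ _

lemma totalDegree_det_le {n σ R : Type*} [Fintype n] [DecidableEq n] [CommRing R]
    (M : Matrix n n (MvPolynomial σ R)) (d : n → ℕ) (h : ∀ i j, (M i j).totalDegree ≤ d j) :
    M.det.totalDegree ≤ ∑ j, d j := by
  rw [Matrix.det_apply]
  refine totalDegree_finsetSum_le fun π _ => (totalDegree_smul_le _ _).trans ?_
  exact (totalDegree_finsetProd _ _).trans (Finset.sum_le_sum fun i _ => h _ _)

lemma totalDegree_coeff_finSuccEquiv_le {R : Type*} [CommSemiring R] {n : ℕ}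
    (f : MvPolynomial (Fin (n + 1)) R) (i : ℕ) :
    ((finSuccEquiv R n f).coeff i).totalDegree ≤ f.totalDegree := by
  by_cases h : (finSuccEquiv R n f).coeff i = 0
  · simp [h]
  · exact (Nat.le_add_right _ _).trans (totalDegree_coeff_finSuccEquiv_add_le f i h)

lemma totalDegree_resultant_finSuccEquiv_le {R : Type*} [CommRing R] {n : ℕ}
    (f g : MvPolynomial (Fin (n + 1)) R) :
    ((finSuccEquiv R n f).resultant (finSuccEquiv R n g)).totalDegree ≤
      2 * f.totalDegree * g.totalDegree := by
  have natDegree_le (h : MvPolynomial (Fin (n + 1)) R) :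
      (finSuccEquiv R n h).natDegree ≤ h.totalDegree := by
    rw [natDegree_finSuccEquiv]
    exact degreeOf_le_totalDegree _ _
  calc ((finSuccEquiv R n f).resultant (finSuccEquiv R n g)).totalDegree
      ≤ ∑ j, Fin.addCases (fun _ => g.totalDegree) (fun _ => f.totalDegree) j := by
        refine totalDegree_det_le _ _ fun i j => ?_
        refine Fin.addCases (fun j => ?_) (fun j => ?_) j <;>
          simp only [Polynomial.sylvester, Matrix.of_apply, Fin.addCases_left,
            Fin.addCases_right] <;>
          split_ifs <;> simp [totalDegree_coeff_finSuccEquiv_le]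
    _ = (finSuccEquiv R n f).natDegree * g.totalDegree +
          (finSuccEquiv R n g).natDegree * f.totalDegree := by
        simp [Fin.sum_univ_add]
    _ ≤ f.totalDegree * g.totalDegree + g.totalDegree * f.totalDegree := by
        gcongr <;> exact natDegree_le _
    _ = 2 * f.totalDegree * g.totalDegree := by ring

lemma resultant_ne_zero_of_irreducible {R : Type*} [CommRing R] [IsDomain R]
    [IsGCDMonoid R] {f g : R[X]} (hf : Irreducible f) (hdeg : f.natDegree ≠ 0)
    (hfg : ¬ f ∣ g) : f.resultant g ≠ 0 := by
  have hprim : f.IsPrimitive := hf.isPrimitive hdeg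
  let φ := algebraMap R (FractionRing R)
  have hφ : Function.Injective φ := IsFractionRing.injective R (FractionRing R)
  have hcop : IsCoprime (f.map φ) (g.map φ) :=
    ((hprim.irreducible_iff_irreducible_map_fraction_map (K := FractionRing R)).1
      hf).coprime_iff_not_dvd.2 fun h => hfg (hprim.dvd_of_fraction_map_dvd_fraction_map h)
  intro h0
  have hmap := Polynomial.resultant_map_map f g f.natDegree g.natDegree φ
  rw [h0, map_zero, ← Polynomial.natDegree_map_eq_of_injective hφ f,
    ← Polynomial.natDegree_map_eq_of_injective hφ g] at hmap
  exact (Polynomial.resultant_eq_zero_iff.1 hmap).2 hcop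

/-- The restriction of a polynomial in `(s, t)` to the line `s = r.level`. -/
noncomputable def restrictLevel (r : SlopedLine K) : MvPolynomial (Fin 2) K →ₐ[K] K[X] :=
  restrictLine ![r.level, 0] ![0, 1]

lemma restrictRed_eq_eval₂_finSuccEquiv (r : SlopedLine K) (f : MvPolynomial (Fin 3) K) :
    restrictRed r f = Polynomial.eval₂ (restrictLevel r : _ →+* K[X])
      (Polynomial.C r.slope * Polynomial.X + Polynomial.C r.intercept) (finSuccEquiv K 2 f) :=
  restrictLine_eq_eval₂_finSuccEquiv _ _ f

variable {f g : MvPolynomial (Fin 3) K} {W : Finset (SlopedLine K)}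

lemma card_le_of_restrictLevel_eq_zero {c : MvPolynomial (Fin 2) K} (hc : c ≠ 0)
    (hlevel : Set.InjOn SlopedLine.level (W : Set (SlopedLine K)))
    (hW : ∀ r ∈ W, restrictLevel r c = 0) : W.card ≤ c.totalDegree := by
  classical
  rw [← Finset.card_image_of_injOn hlevel]
  refine card_le_totalDegree_of_restrictLine_vertical_eq_zero hc _ fun w hw => ?_
  obtain ⟨r, hr, rfl⟩ := Finset.mem_image.1 hw
  exact hW r hr

lemma restrictLevel_resultant_eq_zero {r : SlopedLine K}
    (hdeg : (finSuccEquiv K 2 f).natDegree ≠ 0) (hf : restrictRed r f = 0)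
    (hg : restrictRed r g = 0) :
    restrictLevel r ((finSuccEquiv K 2 f).resultant (finSuccEquiv K 2 g)) = 0 := by
  obtain ⟨a, b, -, -, hab⟩ := Polynomial.exists_mul_add_mul_eq_C_resultant
    (finSuccEquiv K 2 f) (finSuccEquiv K 2 g) le_rfl le_rfl (Or.inl hdeg)
  rw [restrictRed_eq_eval₂_finSuccEquiv] at hf hg
  have := congrArg (Polynomial.eval₂ (restrictLevel r : _ →+* K[X])
    (Polynomial.C r.slope * Polynomial.X + Polynomial.C r.intercept)) hab
  simpa [Polynomial.eval₂_add, Polynomial.eval₂_mul, hf, hg] using this.symm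

lemma card_le_of_degreeOf_zero_eq_zero (hf : f ≠ 0) (hdeg : f.degreeOf 0 = 0)
    (hlevel : Set.InjOn SlopedLine.level (W : Set (SlopedLine K)))
    (hWf : ∀ r ∈ W, restrictRed r f = 0) : W.card ≤ f.totalDegree := by
  rw [← natDegree_finSuccEquiv] at hdeg
  obtain ⟨c, hc⟩ := Polynomial.natDegree_eq_zero.1 hdeg
  have hc0 : c ≠ 0 := by
    rintro rfl
    exact hf ((finSuccEquiv K 2).injective (by rw [← hc, Polynomial.C_0, map_zero]))
  have hcoeff : c.totalDegree ≤ f.totalDegree := by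
    simpa [← hc] using totalDegree_coeff_finSuccEquiv_le f 0
  refine (card_le_of_restrictLevel_eq_zero hc0 hlevel fun r hr => ?_).trans hcoeff
  simpa [restrictRed_eq_eval₂_finSuccEquiv, ← hc] using hWf r hr

theorem card_le_of_restrictRed_eq_zero (hf : Irreducible f) (hfg : ¬ f ∣ g)
    (hlevel : Set.InjOn SlopedLine.level (W : Set (SlopedLine K)))
    (hWf : ∀ r ∈ W, restrictRed r f = 0) (hWg : ∀ r ∈ W, restrictRed r g = 0) :
    W.card ≤ 2 * f.totalDegree * g.totalDegree + f.totalDegree := by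
  by_cases hdeg : (finSuccEquiv K 2 f).natDegree = 0
  · rw [natDegree_finSuccEquiv] at hdeg
    exact (card_le_of_degreeOf_zero_eq_zero hf.ne_zero hdeg hlevel hWf).trans
      (Nat.le_add_left _ _)
  · have hirr : Irreducible (finSuccEquiv K 2 f) := (MulEquiv.irreducible_iff _).2 hf
    have hndvd : ¬ finSuccEquiv K 2 f ∣ finSuccEquiv K 2 g := fun h =>
      hfg ((map_dvd_iff (finSuccEquiv K 2)).1 h)
    calc W.card ≤ ((finSuccEquiv K 2 f).resultant (finSuccEquiv K 2 g)).totalDegree :=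
          card_le_of_restrictLevel_eq_zero (resultant_ne_zero_of_irreducible hirr hdeg hndvd)
            hlevel fun r hr => restrictLevel_resultant_eq_zero hdeg (hWf r hr) (hWg r hr)
      _ ≤ 2 * f.totalDegree * g.totalDegree := totalDegree_resultant_finSuccEquiv_le f g
      _ ≤ _ := Nat.le_add_right _ _

end Bezout

section TangentExpansion

variable {K : Type*} [CommRing K] (P : MvPolynomial (Fin 3) K)

/-- The direction `(-P_t, 0, P_x)`, tangent to the level surfaces of `P` and to the planes
`s = const`. -/
noncomputable def tangentVector : Fin 3 → MvPolynomial (Fin 3) K :=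
  ![-pderiv 2 P, 0, pderiv 0 P]

/-- The derivation `P_x ∂_t - P_t ∂_x` along `tangentVector P`. -/
noncomputable def tangentDeriv :
    Derivation K (MvPolynomial (Fin 3) K) (MvPolynomial (Fin 3) K) :=
  pderiv 0 P • pderiv 2 - pderiv 2 P • pderiv 0

/-- The numerator of the curvature of the plane curves cut out of `P = 0` by the planes
`s = const`; it vanishes on every red line contained in `P = 0`. -/
noncomputable def curvature : MvPolynomial (Fin 3) K :=
  pderiv 0 P * tangentDeriv P (pderiv 2 P) - pderiv 2 P * tangentDeriv P (pderiv 0 P)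

/-- The expansion of `f` along the tangent lines of `P` in the planes `s = const`: the polynomial
`f(x - τ P_t, s, t + τ P_x)` in the variable `τ`. -/
noncomputable def tangentExpansion :
    MvPolynomial (Fin 3) K →ₐ[K] (MvPolynomial (Fin 3) K)[X] :=
  aeval fun i => Polynomial.C (tangentVector P i) * Polynomial.X + Polynomial.C (X i)

/-- `tangentDeriv P` acting on the coefficients of a polynomial in `τ`. -/
noncomputable def tangentDerivCoeff :
    Derivation K (MvPolynomial (Fin 3) K)[X] (MvPolynomial (Fin 3) K)[X] :=
  PolynomialModule.equivPolynomialSelf.compDer (tangentDeriv P).mapCoeffs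

lemma tangentDeriv_apply (f : MvPolynomial (Fin 3) K) :
    tangentDeriv P f = pderiv 0 P * pderiv 2 f - pderiv 2 P * pderiv 0 f := by
  simp [tangentDeriv]

lemma tangentDeriv_self : tangentDeriv P P = 0 := by
  rw [tangentDeriv_apply, mul_comm, sub_self]

lemma coeff_tangentDerivCoeff (q : (MvPolynomial (Fin 3) K)[X]) (n : ℕ) :
    (tangentDerivCoeff P q).coeff n = tangentDeriv P (q.coeff n) := rfl

lemma tangentDerivCoeff_C (f : MvPolynomial (Fin 3) K) :
    tangentDerivCoeff P (Polynomial.C f) = Polynomial.C (tangentDeriv P f) := by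
  ext1 n
  rw [coeff_tangentDerivCoeff, Polynomial.coeff_C, Polynomial.coeff_C]
  split_ifs <;> simp

lemma tangentDerivCoeff_X : tangentDerivCoeff P Polynomial.X = 0 := by
  ext1 n
  rw [coeff_tangentDerivCoeff, Polynomial.coeff_X, Polynomial.coeff_zero]
  split_ifs <;> simp

lemma tangentExpansion_X (i : Fin 3) :
    tangentExpansion P (X i) =
      Polynomial.C (tangentVector P i) * Polynomial.X + Polynomial.C (X i) :=
  aeval_X _ i

lemma tangentExpansion_eq_restrictLine (f : MvPolynomial (Fin 3) K) :
    tangentExpansion P f = restrictLine X (tangentVector P) (map C f) := by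
  rw [← algebraMap_eq, restrictLine, aeval_map_algebraMap, tangentExpansion]

lemma natDegree_tangentExpansion_le (f : MvPolynomial (Fin 3) K) :
    (tangentExpansion P f).natDegree ≤ f.totalDegree := by
  rw [tangentExpansion_eq_restrictLine]
  exact (natDegree_restrictLine_le _ _ _).trans (Finset.sup_mono (support_map_subset _ _))

lemma coeff_zero_tangentExpansion (f : MvPolynomial (Fin 3) K) :
    (tangentExpansion P f).coeff 0 = f := by
  rw [Polynomial.coeff_zero_eq_eval_zero, tangentExpansion_eq_restrictLine, eval_restrictLine,
    eval_map]
  simp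

lemma restrictLine_eq_map_tangentExpansion (a : Fin 3 → K) (f : MvPolynomial (Fin 3) K) :
    restrictLine a (fun i => eval a (tangentVector P i)) f =
      (tangentExpansion P f).map (eval a) := by
  induction f using MvPolynomial.induction_on with
  | C c => simp [restrictLine]
  | add f g hf hg => simp [hf, hg]
  | mul_X f i hf => simp [hf, restrictLine_X, tangentExpansion_X]

-- The tangent field moves along itself by `tangentDeriv P`; apart from a reparametrisation, the
-- change of its direction is measured by the curvature.
lemma tangentDerivCoeff_tangentExpansion (f : MvPolynomial (Fin 3) K) :
    Polynomial.C (pderiv 0 P) * tangentDerivCoeff P (tangentExpansion P f) =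
      (Polynomial.C (pderiv 0 P) +
        Polynomial.X * Polynomial.C (tangentDeriv P (pderiv 0 P))) *
          Polynomial.derivative (tangentExpansion P f) -
        Polynomial.X * Polynomial.C (curvature P) * tangentExpansion P (pderiv 0 f) := by
  induction f using MvPolynomial.induction_on with
  | C c => simp [tangentDerivCoeff_C, tangentDeriv_apply]
  | add f g hf hg =>
    simp only [map_add, mul_add, hf, hg]
    ring
  | mul_X f i hf =>
    have hX : Polynomial.C (pderiv 0 P) * tangentDerivCoeff P (tangentExpansion P (X i)) =
        (Polynomial.C (pderiv 0 P) +
          Polynomial.X * Polynomial.C (tangentDeriv P (pderiv 0 P))) *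
            Polynomial.derivative (tangentExpansion P (X i)) -
          Polynomial.X * Polynomial.C (curvature P) * tangentExpansion P (pderiv 0 (X i)) := by
      fin_cases i <;>
        simp [tangentExpansion_X, tangentVector, tangentDerivCoeff_C, tangentDerivCoeff_X,
          tangentDeriv_apply, curvature, pderiv_X] <;>
        ring
    simp only [map_mul, Derivation.leibniz, smul_eq_mul, Polynomial.derivative_mul, map_add,
      mul_add] at hf hX ⊢
    linear_combination tangentExpansion P (X i) * hf + tangentExpansion P f * hX

variable {P}

lemma dvd_mul_coeff_succ_tangentExpansion (hcurv : P ∣ curvature P) {n : ℕ}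
    (hn : P ∣ (tangentExpansion P P).coeff n) :
    P ∣ pderiv 0 P * ((tangentExpansion P P).coeff (n + 1) * (n + 1)) := by
  have hderiv : P ∣ tangentDeriv P ((tangentExpansion P P).coeff n) := by
    obtain ⟨c, hc⟩ := hn
    simp [hc, Derivation.leibniz, tangentDeriv_self]
  have hshift : P ∣ (Polynomial.X * (Polynomial.C (tangentDeriv P (pderiv 0 P)) *
      Polynomial.derivative (tangentExpansion P P))).coeff n := by
    cases n with
    | zero => simp
    | succ m =>
      rw [Polynomial.coeff_X_mul, Polynomial.coeff_C_mul, Polynomial.coeff_derivative]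
      exact (hn.mul_right _).mul_left _
  have hbend : P ∣ (Polynomial.X * (Polynomial.C (curvature P) *
      tangentExpansion P (pderiv 0 P))).coeff n := by
    cases n with
    | zero => simp
    | succ m =>
      rw [Polynomial.coeff_X_mul, Polynomial.coeff_C_mul]
      exact hcurv.mul_right _
  have hcoeff := congrArg (Polynomial.coeff · n) (tangentDerivCoeff_tangentExpansion P P)
  simp only [Polynomial.coeff_sub, Polynomial.coeff_C_mul, coeff_tangentDerivCoeff, add_mul,
    Polynomial.coeff_add, Polynomial.coeff_derivative, mul_assoc] at hcoeff
  rw [eq_sub_of_add_eq (sub_eq_iff_eq_add.1 hcoeff.symm)]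
  exact dvd_sub (dvd_add (hderiv.mul_left _) hbend) hshift

end TangentExpansion

section RuledSurface

variable {K : Type*} [Field K] {P : MvPolynomial (Fin 3) K}

lemma dvd_coeff_tangentExpansion (hP : Irreducible P)
    (hchar : ∀ n : ℕ, n ≠ 0 → n ≤ P.totalDegree → (n : K) ≠ 0) (hx : ¬ P ∣ pderiv 0 P)
    (hcurv : P ∣ curvature P) (n : ℕ) : P ∣ (tangentExpansion P P).coeff n := by
  induction n with
  | zero => rw [coeff_zero_tangentExpansion]
  | succ n ih =>
    rcases lt_or_ge P.totalDegree (n + 1) with hn | hn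
    · rw [Polynomial.coeff_eq_zero_of_natDegree_lt
        ((natDegree_tangentExpansion_le P P).trans_lt hn)]
      exact dvd_zero P
    · have hunit : IsUnit ((n : MvPolynomial (Fin 3) K) + 1) := by
        simpa using (isUnit_iff_ne_zero.2 (hchar (n + 1) n.succ_ne_zero hn)).map
          (C : K →+* MvPolynomial (Fin 3) K)
      have hdvd := (hP.prime.dvd_or_dvd
        (dvd_mul_coeff_succ_tangentExpansion hcurv ih)).resolve_left hx
      exact hunit.dvd_mul_right.1 hdvd

lemma restrictLine_reparametrize {σ : Type*} (a v : σ → K) (c τ : K) (f : MvPolynomial σ K) :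
    restrictLine (fun i => v i * τ + a i) (fun i => v i * c) f =
      (restrictLine a v f).comp (Polynomial.C c * Polynomial.X + Polynomial.C τ) := by
  induction f using MvPolynomial.induction_on with
  | C c => simp [restrictLine]
  | add f g hf hg => simp [hf, hg]
  | mul_X f i hf =>
    simp only [map_mul, hf, restrictLine_X, Polynomial.mul_comp, Polynomial.add_comp,
      Polynomial.C_comp, Polynomial.X_comp, Polynomial.C_add, map_mul]
    ring

/-- The red line tangent to the surface `P = 0` at the point of the blue line `b` with `s = z`.
It is meaningful only where `P_x` does not vanish. -/
noncomputable def tangentRed (P : MvPolynomial (Fin 3) K) (b : SlopedLine K) (z : K) :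
    SlopedLine K :=
  let u := -(restrictBlue b (pderiv 2 P)).eval z / (restrictBlue b (pderiv 0 P)).eval z
  ⟨u, b.slope * z + b.intercept - u * b.level, z⟩

lemma restrictRed_tangentRed_eq_zero (hexp : ∀ n, P ∣ (tangentExpansion P P).coeff n)
    {b : SlopedLine K} (hb : restrictBlue b P = 0) {z : K}
    (hz : (restrictBlue b (pderiv 0 P)).eval z ≠ 0) : restrictRed (tangentRed P b z) P = 0 := by
  let a : Fin 3 → K := ![b.slope * z + b.intercept, z, b.level]
  have eval_blue (f : MvPolynomial (Fin 3) K) : (restrictBlue b f).eval z = eval a f := by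
    rw [restrictBlue, eval_restrictLine]
    congr 2
    funext i
    fin_cases i <;> simp [a]
  have htangent : restrictLine a (fun i => eval a (tangentVector P i)) P = 0 := by
    have ha : eval a P = 0 := by rw [← eval_blue, hb, Polynomial.eval_zero]
    rw [restrictLine_eq_map_tangentExpansion]
    ext n
    obtain ⟨c, hc⟩ := hexp n
    simp [hc, ha]
  rw [eval_blue] at hz
  have hline : restrictRed (tangentRed P b z) P =
      (restrictLine a (fun i => eval a (tangentVector P i)) P).comp
        (Polynomial.C (eval a (pderiv 0 P))⁻¹ * Polynomial.X +
          Polynomial.C (-(b.level / eval a (pderiv 0 P)))) := by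
    have ha₀ : a 0 = b.slope * z + b.intercept := rfl
    have ha₁ : a 1 = z := rfl
    have ha₂ : a 2 = b.level := rfl
    rw [restrictRed, ← restrictLine_reparametrize]
    congr 2 <;> funext i <;> fin_cases i <;>
      simp [tangentRed, tangentVector, eval_blue, ha₀, ha₁, ha₂] <;> field_simp <;> ring
  rw [hline, htangent, Polynomial.zero_comp]

/-- The union of the tangent lines `tangentRed P b z` over the points of the blue line `b`, as a
surface. -/
noncomputable def tangentRuled (P : MvPolynomial (Fin 3) K) (b : SlopedLine K) :
    MvPolynomial (Fin 3) K :=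
  (X 0 - C b.slope * X 1 - C b.intercept) *
      Polynomial.aeval (X 1) (restrictBlue b (pderiv 0 P)) +
    (X 2 - C b.level) * Polynomial.aeval (X 1) (restrictBlue b (pderiv 2 P))

lemma restrictRed_tangentRed_tangentRuled {b : SlopedLine K} {z : K}
    (hz : (restrictBlue b (pderiv 0 P)).eval z ≠ 0) :
    restrictRed (tangentRed P b z) (tangentRuled P b) = 0 := by
  have on_level (q : K[X]) : restrictRed (tangentRed P b z) (Polynomial.aeval (X 1) q) =
      Polynomial.C (q.eval z) := by
    have hX : restrictRed (tangentRed P b z) (X 1) = algebraMap K K[X] z := by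
      simp [restrictRed, restrictLine_X, tangentRed]
    rw [← Polynomial.aeval_algHom_apply, hX, Polynomial.aeval_algebraMap_apply]
    simp
  simp only [tangentRuled, map_add, map_mul, map_sub, on_level, algHom_C]
  simp only [restrictRed, restrictLine_X, tangentRed, Polynomial.algebraMap_eq, Matrix.cons_val,
    Polynomial.C_0, Polynomial.C_1, Polynomial.C_sub, Polynomial.C_add, Polynomial.C_mul,
    div_eq_mul_inv, Polynomial.C_neg]
  have hinv : Polynomial.C ((restrictBlue b (pderiv 0 P)).eval z) *
      Polynomial.C ((restrictBlue b (pderiv 0 P)).eval z)⁻¹ = 1 := by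
    rw [← Polynomial.C_mul, mul_inv_cancel₀ hz, Polynomial.C_1]
  linear_combination (-Polynomial.C ((restrictBlue b (pderiv 2 P)).eval z) *
    (Polynomial.X - Polynomial.C b.level)) * hinv

lemma dvd_tangentRuled [Infinite K] (hP : Irreducible P)
    (hexp : ∀ n, P ∣ (tangentExpansion P P).coeff n) {b : SlopedLine K}
    (hb : restrictBlue b P = 0) (hbx : restrictBlue b (pderiv 0 P) ≠ 0) :
    P ∣ tangentRuled P b := by
  classical
  by_contra hndvd
  have hinf : {z : K | (restrictBlue b (pderiv 0 P)).eval z ≠ 0}.Infinite :=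
    (Polynomial.finite_setOfPred_isRoot hbx).infinite_compl
  obtain ⟨Z, hZ, hcard⟩ := hinf.exists_subset_card_eq
    (2 * P.totalDegree * (tangentRuled P b).totalDegree + P.totalDegree + 1)
  have hlevel (z : K) : (tangentRed P b z).level = z := rfl
  have hinj : Function.Injective (tangentRed P b) := fun z z' h => by
    rw [← hlevel z, h, hlevel]
  have hbound := card_le_of_restrictRed_eq_zero (W := Z.image (tangentRed P b)) hP hndvd
    (by
      rw [Finset.coe_image]
      rintro _ ⟨z, -, rfl⟩ _ ⟨z', -, rfl⟩ (h : z = z')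
      rw [h])
    (by
      simp only [Finset.forall_mem_image]
      exact fun z hz => restrictRed_tangentRed_eq_zero hexp hb (hZ hz))
    (by
      simp only [Finset.forall_mem_image]
      exact fun z hz => restrictRed_tangentRed_tangentRuled (hZ hz))
  rw [Finset.card_image_of_injective _ hinj, hcard] at hbound
  omega

lemma restrictBlue_of_dvd_tangentRuled {b b' : SlopedLine K} (h : P ∣ tangentRuled P b)
    (hb' : restrictBlue b' P = 0) :
    (Polynomial.C (b'.slope - b.slope) * Polynomial.X +
        Polynomial.C (b'.intercept - b.intercept)) * restrictBlue b (pderiv 0 P) +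
      Polynomial.C (b'.level - b.level) * restrictBlue b (pderiv 2 P) = 0 := by
  have hzero : restrictBlue b' (tangentRuled P b) = 0 := by
    obtain ⟨c, hc⟩ := h
    rw [hc, map_mul, hb', zero_mul]
  have on_parameter (q : K[X]) : restrictBlue b' (Polynomial.aeval (X 1) q) = q := by
    have hX : restrictBlue b' (X 1) = Polynomial.X := by simp [restrictBlue, restrictLine_X]
    rw [← Polynomial.aeval_algHom_apply, hX, Polynomial.aeval_X_left_apply]
  simp only [tangentRuled, map_add, map_mul, map_sub, on_parameter, algHom_C] at hzero
  simp only [restrictBlue, restrictLine_X, Polynomial.algebraMap_eq, Matrix.cons_val,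
    Polynomial.C_0, Polynomial.C_1] at hzero ⊢
  simp only [Polynomial.C_sub]
  linear_combination hzero

/-- The points `(level, slope, intercept)` of `K³` given by three lines with distinct levels are
collinear. -/
def CollinearParams (b b₁ b₂ : SlopedLine K) : Prop :=
  (b₁.level - b.level) * (b₂.slope - b.slope) = (b₂.level - b.level) * (b₁.slope - b.slope) ∧
    (b₁.level - b.level) * (b₂.intercept - b.intercept) =
      (b₂.level - b.level) * (b₁.intercept - b.intercept)

theorem collinearParams_of_dvd_curvature [Infinite K] (hP : Irreducible P)
    (hchar : ∀ n : ℕ, n ≠ 0 → n ≤ P.totalDegree → (n : K) ≠ 0) (hx : ¬ P ∣ pderiv 0 P)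
    (hcurv : P ∣ curvature P) {b b₁ b₂ : SlopedLine K} (hb : restrictBlue b P = 0)
    (hb₁ : restrictBlue b₁ P = 0) (hb₂ : restrictBlue b₂ P = 0)
    (hbx : restrictBlue b (pderiv 0 P) ≠ 0) : CollinearParams b b₁ b₂ := by
  have hruled : P ∣ tangentRuled P b :=
    dvd_tangentRuled hP (dvd_coeff_tangentExpansion hP hchar hx hcurv) hb hbx
  have h₁ := restrictBlue_of_dvd_tangentRuled hruled hb₁
  have h₂ := restrictBlue_of_dvd_tangentRuled hruled hb₂
  have hmul : (Polynomial.C ((b₁.level - b.level) * (b₂.slope - b.slope) -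
        (b₂.level - b.level) * (b₁.slope - b.slope)) * Polynomial.X +
      Polynomial.C ((b₁.level - b.level) * (b₂.intercept - b.intercept) -
        (b₂.level - b.level) * (b₁.intercept - b.intercept))) *
      restrictBlue b (pderiv 0 P) = 0 := by
    simp only [Polynomial.C_sub, Polynomial.C_mul] at h₁ h₂ ⊢
    linear_combination (Polynomial.C b₁.level - Polynomial.C b.level) * h₂ -
      (Polynomial.C b₂.level - Polynomial.C b.level) * h₁
  have hlin := (mul_eq_zero.1 hmul).resolve_right hbx
  constructor
  · simpa only [Polynomial.coeff_add, Polynomial.coeff_C_mul, Polynomial.coeff_X_one, mul_one,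
      Polynomial.coeff_C_succ, add_zero, Polynomial.coeff_zero, sub_eq_zero]
      using congrArg (Polynomial.coeff · 1) hlin
  · simpa only [Polynomial.coeff_add, Polynomial.coeff_C_mul, Polynomial.coeff_X_zero, mul_zero,
      Polynomial.coeff_C_zero, zero_add, Polynomial.coeff_zero, sub_eq_zero]
      using congrArg (Polynomial.coeff · 0) hlin

end RuledSurface

section PartialDerivatives

variable {σ K : Type*} [CommRing K]

lemma totalDegree_pderiv_lt {i : σ} {f : MvPolynomial σ K} (h : pderiv i f ≠ 0) :
    (pderiv i f).totalDegree < f.totalDegree := by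
  have hlt : ∀ m ∈ (pderiv i f).support, (m.sum fun _ e => e) < f.totalDegree := by
    intro m hm
    rw [mem_support_iff, coeff_pderiv] at hm
    have hle := le_totalDegree (mem_support_iff.2 (left_ne_zero_of_mul hm))
    rw [Finsupp.sum_add_index' (by simp) (by simp)] at hle
    simpa using hle
  obtain ⟨m, hm⟩ := support_nonempty.2 h
  rw [totalDegree, Finset.sup_lt_iff (bot_le.trans_lt (hlt m hm))]
  exact hlt

lemma totalDegree_pderiv_le (i : σ) (f : MvPolynomial σ K) :
    (pderiv i f).totalDegree ≤ f.totalDegree := by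
  by_cases h : pderiv i f = 0
  · simp [h]
  · exact (totalDegree_pderiv_lt h).le

lemma degreeOf_eq_zero_of_pderiv_eq_zero [NoZeroDivisors K] {i : σ} {f : MvPolynomial σ K}
    (hchar : ∀ n : ℕ, n ≠ 0 → n ≤ f.totalDegree → (n : K) ≠ 0) (h : pderiv i f = 0) :
    f.degreeOf i = 0 := by
  classical
  rw [degreeOf_eq_sup, ← Nat.bot_eq_zero, Finset.sup_eq_bot_iff]
  intro m hm
  by_contra hmi
  have hshift : m - Finsupp.single i 1 + Finsupp.single i 1 = m :=
    tsub_add_cancel_of_le (Finsupp.single_le_iff.2 (Nat.one_le_iff_ne_zero.2 hmi))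
  have hcoeff := coeff_pderiv (i := i) f (m - Finsupp.single i 1)
  rw [h, coeff_zero, hshift, ← Nat.cast_succ, Finsupp.tsub_apply, Finsupp.single_eq_same,
    Nat.succ_eq_add_one, Nat.sub_add_cancel (Nat.one_le_iff_ne_zero.2 hmi)] at hcoeff
  exact mul_ne_zero (mem_support_iff.1 hm)
    (hchar _ hmi ((le_degreeOf_of_mem_support i hm).trans (degreeOf_le_totalDegree f i)))
    hcoeff.symm

lemma totalDegree_tangentDeriv_le (P f : MvPolynomial (Fin 3) K) :
    (tangentDeriv P f).totalDegree ≤ P.totalDegree + f.totalDegree := by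
  rw [tangentDeriv_apply]
  refine (totalDegree_sub _ _).trans (max_le ?_ ?_) <;>
    exact (totalDegree_mul _ _).trans
      (add_le_add (totalDegree_pderiv_le _ _) (totalDegree_pderiv_le _ _))

lemma totalDegree_curvature_le (P : MvPolynomial (Fin 3) K) :
    (curvature P).totalDegree ≤ 3 * P.totalDegree := by
  have hx := totalDegree_pderiv_le 0 P
  have ht := totalDegree_pderiv_le 2 P
  have hDx := totalDegree_tangentDeriv_le P (pderiv 0 P)
  have hDt := totalDegree_tangentDeriv_le P (pderiv 2 P)
  refine (totalDegree_sub _ _).trans (max_le ?_ ?_) <;>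
    refine (totalDegree_mul _ _).trans ?_ <;> omega

lemma derivative_restrictRed (r : SlopedLine K) (f : MvPolynomial (Fin 3) K) :
    Polynomial.derivative (restrictRed r f) =
      Polynomial.C r.slope * restrictRed r (pderiv 0 f) + restrictRed r (pderiv 2 f) := by
  simp [restrictRed, derivative_restrictLine, Fin.sum_univ_three]

lemma restrictRed_curvature_eq_zero {r : SlopedLine K} {P : MvPolynomial (Fin 3) K}
    (h : restrictRed r P = 0) : restrictRed r (curvature P) = 0 := by
  have hgrad : restrictRed r (pderiv 2 P) =
      -(Polynomial.C r.slope * restrictRed r (pderiv 0 P)) := by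
    have := derivative_restrictRed r P
    rw [h, Polynomial.derivative_zero] at this
    linear_combination -this
  have hgrad' := congrArg Polynomial.derivative hgrad
  simp only [Polynomial.derivative_neg, Polynomial.derivative_C_mul,
    derivative_restrictRed] at hgrad'
  simp only [curvature, tangentDeriv_apply, map_sub, map_mul, hgrad]
  linear_combination restrictRed r (pderiv 0 P) ^ 2 * hgrad'

end PartialDerivatives

section DimensionCount

variable {σ K : Type*} [Field K]

lemma finrank_restrictDegree [Fintype σ] (e : ℕ) :
    Module.finrank K (restrictDegree σ K e) = (e + 1) ^ Fintype.card σ := by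
  let exponents : {m : σ →₀ ℕ | ∀ i, m i ≤ e} ≃ (σ → Finset.Iic e) :=
    (Finsupp.equivFunOnFinite.subtypeEquiv (by simp)).trans
      (Equiv.subtypePiEquivPi (p := fun _ n => n ∈ Finset.Iic e))
  rw [restrictDegree, Module.finrank_eq_nat_card_basis (basisRestrictSupport K _),
    Nat.card_congr exponents, Nat.card_fun, Nat.card_eq_fintype_card (α := Finset.Iic e),
    Fintype.card_coe, Nat.card_Iic, Nat.card_eq_fintype_card]

theorem exists_ne_zero_restrictLine_eq_zero [Fintype σ] {ι : Type*} (S : Finset ι)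
    (a v : ι → σ → K) (e : ℕ)
    (hS : (Fintype.card σ * e + 1) * S.card < (e + 1) ^ Fintype.card σ) :
    ∃ f : MvPolynomial σ K, f ≠ 0 ∧ f.totalDegree ≤ Fintype.card σ * e ∧
      ∀ i ∈ S, restrictLine (a i) (v i) f = 0 := by
  let restrictions : restrictDegree σ K e →ₗ[K] S → Fin (Fintype.card σ * e + 1) → K :=
    LinearMap.pi fun i => LinearMap.pi fun j => (Polynomial.lcoeff K j).comp
      ((restrictLine (a i) (v i)).toLinearMap.comp (restrictDegree σ K e).subtype)
  have hker : LinearMap.ker restrictions ≠ ⊥ := by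
    have : Module.Finite K (restrictDegree σ K e) :=
      Module.finite_of_finrank_pos (by simp [finrank_restrictDegree])
    refine LinearMap.ker_ne_bot_of_finrank_lt ?_
    rw [finrank_restrictDegree, Module.finrank_pi_fintype]
    simpa [mul_comm] using hS
  obtain ⟨⟨f, hf⟩, hker, hne⟩ := (Submodule.ne_bot_iff _).1 hker
  have hdeg : f.totalDegree ≤ Fintype.card σ * e := by
    rw [mem_restrictDegree] at hf
    refine Finset.sup_le fun m hm => ?_
    rw [Finsupp.sum_fintype _ _ fun _ => rfl]
    simpa using Finset.sum_le_card_nsmul Finset.univ _ e fun i _ => hf m hm i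
  refine ⟨f, fun h => hne (Subtype.ext h), hdeg, fun i hi => ?_⟩
  ext j
  by_cases hj : j < Fintype.card σ * e + 1
  · exact congrFun (congrFun (LinearMap.mem_ker.1 hker) ⟨i, hi⟩) ⟨j, hj⟩
  · refine Polynomial.coeff_eq_zero_of_natDegree_lt ?_
    have := natDegree_restrictLine_le (a i) (v i) f
    omega

theorem exists_irreducible_dvd_forall_map_eq_zero {ι A : Type*} [CommRing A] [IsDomain A]
    (φ : ι → MvPolynomial σ K →+* A) (κ : ℕ) {f : MvPolynomial σ K} (hf : f ≠ 0)
    {W : Finset ι} (hW : ∀ i ∈ W, φ i f = 0) (hcard : κ * f.totalDegree < W.card) :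
    ∃ P, Irreducible P ∧ P ∣ f ∧ ∃ W' ⊆ W, (∀ i ∈ W', φ i P = 0) ∧
      κ * P.totalDegree < W'.card := by
  classical
  induction f using WfDvdMonoid.induction_on_irreducible generalizing W with
  | zero => exact absurd rfl hf
  | unit u hu =>
    obtain ⟨i, hi⟩ := Finset.card_pos.1 (Nat.zero_lt_of_lt hcard)
    exact absurd (hW i hi) (hu.map (φ i)).ne_zero
  | mul g P hg hP ih =>
    rw [totalDegree_mul_of_isDomain hP.ne_zero hg, mul_add] at hcard
    by_cases hmany : κ * P.totalDegree < (W.filter fun i => φ i P = 0).card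
    · exact ⟨P, hP, dvd_mul_right _ _, _, Finset.filter_subset _ _, by simp, hmany⟩
    · have hsplit := Finset.card_filter_add_card_filter_not (s := W) fun i => φ i P = 0
      obtain ⟨Q, hQ, hQg, W', hW', hvanish, hcard'⟩ :=
        ih hg (W := W.filter fun i => ¬ φ i P = 0)
          (fun i hi => by
            have := hW i (Finset.mem_of_mem_filter i hi)
            rw [map_mul] at this
            exact (mul_eq_zero.1 this).resolve_left (Finset.mem_filter.1 hi).2)
          (by omega)
      exact ⟨Q, hQ, hQg.mul_left P, W', hW'.trans (Finset.filter_subset _ _), hvanish, hcard'⟩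

end DimensionCount

section TwoFamilies

variable {K : Type*} [Field K]

lemma card_le_natDegree_of_eval_eq_zero {ι : Type*} {q : K[X]} (hq : q ≠ 0) {S : Finset ι}
    {f : ι → K} (hf : Set.InjOn f (S : Set ι)) (h : ∀ i ∈ S, q.eval (f i) = 0) :
    S.card ≤ q.natDegree := by
  classical
  rw [← Finset.card_image_of_injOn hf]
  refine Polynomial.card_le_degree_of_subset_roots fun x hx => ?_
  obtain ⟨i, hi, rfl⟩ := Finset.mem_image.1 hx
  exact (Polynomial.mem_roots hq).2 (h i hi)

variable {P f : MvPolynomial (Fin 3) K} {R B S W : Finset (SlopedLine K)}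

lemma restrictBlue_eq_zero_of_totalDegree_lt_card {b : SlopedLine K}
    (hlevel : Set.InjOn SlopedLine.level (S : Set (SlopedLine K)))
    (hS : ∀ r ∈ S, Meets r b ∧ restrictRed r f = 0) (hcard : f.totalDegree < S.card) :
    restrictBlue b f = 0 := by
  by_contra hne
  refine (card_le_natDegree_of_eval_eq_zero hne hlevel fun r hr => ?_).not_gt
    ((natDegree_restrictBlue_le b f).trans_lt hcard)
  rw [← (hS r hr).1.eval_restrictRed_eq, (hS r hr).2, Polynomial.eval_zero]

lemma card_le_totalDegree_of_restrictRed_ne_zero {r : SlopedLine K}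
    (hlevel : Set.InjOn SlopedLine.level (S : Set (SlopedLine K)))
    (hS : ∀ b ∈ S, Meets r b ∧ restrictBlue b f = 0) (hne : restrictRed r f ≠ 0) :
    S.card ≤ f.totalDegree := by
  refine (card_le_natDegree_of_eval_eq_zero hne hlevel fun b hb => ?_).trans
    (natDegree_restrictRed_le r f)
  rw [(hS b hb).1.eval_restrictRed_eq, (hS b hb).2, Polynomial.eval_zero]

lemma not_dvd_pderiv_of_totalDegree_lt_card (hP : P ≠ 0)
    (hchar : ∀ n : ℕ, n ≠ 0 → n ≤ P.totalDegree → (n : K) ≠ 0)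
    (hlevel : Set.InjOn SlopedLine.level (W : Set (SlopedLine K)))
    (hW : ∀ r ∈ W, restrictRed r P = 0) (hcard : P.totalDegree < W.card) :
    ¬ P ∣ pderiv 0 P := by
  intro hdvd
  have hzero : pderiv 0 P = 0 := by
    by_contra hne
    exact (totalDegree_le_of_dvd_of_isDomain hdvd hne).not_gt (totalDegree_pderiv_lt hne)
  exact (card_le_of_degreeOf_zero_eq_zero hP (degreeOf_eq_zero_of_pderiv_eq_zero hchar hzero)
    hlevel hW).not_gt hcard

lemma dvd_curvature_of_lt_card (hP : Irreducible P)
    (hlevel : Set.InjOn SlopedLine.level (W : Set (SlopedLine K)))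
    (hW : ∀ r ∈ W, restrictRed r P = 0)
    (hcard : 6 * P.totalDegree ^ 2 + P.totalDegree < W.card) : P ∣ curvature P := by
  by_contra hndvd
  have hbezout := card_le_of_restrictRed_eq_zero hP hndvd hlevel hW fun r hr =>
    restrictRed_curvature_eq_zero (hW r hr)
  have := Nat.mul_le_mul_left (2 * P.totalDegree) (totalDegree_curvature_le P)
  nlinarith

lemma exists_restrictRed_ne_zero (hP : Irreducible P) (hPf : ¬ P ∣ f)
    (hlevel : Set.InjOn SlopedLine.level (W : Set (SlopedLine K)))
    (hW : ∀ r ∈ W, restrictRed r P = 0)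
    (hcard : 2 * P.totalDegree * f.totalDegree + P.totalDegree < W.card) :
    ∃ r ∈ W, restrictRed r f ≠ 0 := by
  by_contra! hall
  exact (card_le_of_restrictRed_eq_zero hP hPf hlevel hW hall).not_gt hcard

open Classical in
lemma exists_ne_zero_restrict_eq_zero {s e : ℕ}
    (hred : Set.InjOn SlopedLine.level (R : Set (SlopedLine K)))
    (hblue : ∀ r ∈ R, Set.InjOn SlopedLine.level {b | b ∈ B ∧ Meets r b})
    (hdeg_red : ∀ r ∈ R, s ≤ (B.filter (Meets r)).card)
    (hSR : S ⊆ R) (hS : (3 * e + 1) * S.card < (e + 1) ^ 3)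
    (hdeg_blue : ∀ b ∈ B, 3 * e < (S.filter (Meets · b)).card) (hs : 3 * e < s) :
    ∃ f : MvPolynomial (Fin 3) K, f ≠ 0 ∧ f.totalDegree ≤ 3 * e ∧
      (∀ r ∈ R, restrictRed r f = 0) ∧ ∀ b ∈ B, restrictBlue b f = 0 := by
  obtain ⟨f, hf, hdeg, hfS⟩ := exists_ne_zero_restrictLine_eq_zero S
    (fun r => ![r.intercept, r.level, 0]) (fun r => ![r.slope, 0, 1]) e (by simpa using hS)
  rw [Fintype.card_fin] at hdeg
  have hfB : ∀ b ∈ B, restrictBlue b f = 0 := fun b hb =>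
    restrictBlue_eq_zero_of_totalDegree_lt_card (S := S.filter (Meets · b))
      (hred.mono fun r hr => hSR (Finset.mem_of_mem_filter r hr))
      (fun r hr => ⟨(Finset.mem_filter.1 hr).2, hfS r (Finset.mem_of_mem_filter r hr)⟩)
      (hdeg.trans_lt (hdeg_blue b hb))
  refine ⟨f, hf, hdeg, fun r hr => ?_, hfB⟩
  by_contra hne
  have := card_le_totalDegree_of_restrictRed_ne_zero (S := B.filter (Meets r))
    (by simpa using hblue r hr)
    (fun b hb => ⟨(Finset.mem_filter.1 hb).2, hfB b (Finset.mem_of_mem_filter b hb)⟩) hne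
  have := hdeg_red r hr
  omega

open Classical in
lemma le_add_card_filter_restrictBlue_ne_zero {r : SlopedLine K} {d : ℕ}
    (hblue : Set.InjOn SlopedLine.level {b | b ∈ B ∧ Meets r b})
    (hdeg : f.totalDegree ≤ d) (hf : restrictRed r f ≠ 0) :
    (B.filter (Meets r)).card ≤
      d + ((B.filter (Meets r)).filter fun b => restrictBlue b f ≠ 0).card := by
  have hvanish : ((B.filter (Meets r)).filter fun b => restrictBlue b f = 0).card ≤ d := by
    refine (card_le_totalDegree_of_restrictRed_ne_zero ?_ (fun b hb => ?_) hf).trans hdeg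
    · exact hblue.mono fun b hb => by simp_all
    · simp_all
  have hsplit := Finset.card_filter_add_card_filter_not (s := B.filter (Meets r))
    fun b => restrictBlue b f = 0
  simp only [ne_eq]
  omega

theorem exists_irreducible_dvd_curvature {d : ℕ} (hf : f ≠ 0) (hdeg : f.totalDegree ≤ d)
    (hchar : ∀ n : ℕ, n ≠ 0 → n ≤ d → (n : K) ≠ 0)
    (hlevel : Set.InjOn SlopedLine.level (R : Set (SlopedLine K)))
    (hfR : ∀ r ∈ R, restrictRed r f = 0) (hR : 7 * d ^ 2 < R.card) :
    ∃ P, Irreducible P ∧ P ∣ f ∧ P ∣ curvature P ∧ ¬ P ∣ pderiv 0 P ∧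
      ∃ W ⊆ R, (∀ r ∈ W, restrictRed r P = 0) ∧ 7 * d * P.totalDegree < W.card := by
  obtain ⟨P, hP, hPf, W, hWR, hWP, hWcard⟩ := exists_irreducible_dvd_forall_map_eq_zero
    (fun r => (restrictRed r : _ →+* K[X])) (7 * d) hf hfR
    (by nlinarith [Nat.mul_le_mul_left (7 * d) hdeg])
  have hdegP : P.totalDegree ≤ d := (totalDegree_le_of_dvd_of_isDomain hPf hf).trans hdeg
  have hlevelW : Set.InjOn SlopedLine.level (W : Set (SlopedLine K)) := hlevel.mono hWR
  refine ⟨P, hP, hPf, ?_, ?_, W, hWR, hWP, hWcard⟩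
  · exact dvd_curvature_of_lt_card hP hlevelW hWP (by nlinarith)
  · exact not_dvd_pderiv_of_totalDegree_lt_card hP.ne_zero
      (fun n hn hnP => hchar n hn (hnP.trans hdegP)) hlevelW hWP (by nlinarith)

-- An irreducible component `P` of the surface carries so many red lines that it is ruled by red
-- lines; all blue lines in `P` then meet the same red lines, so their parameters are collinear.
open Classical in
theorem exists_collinearParams_of_rich [Infinite K] {s e : ℕ}
    (hchar : ∀ n : ℕ, n ≠ 0 → n ≤ 3 * e → (n : K) ≠ 0)
    (hred : Set.InjOn SlopedLine.level (R : Set (SlopedLine K)))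
    (hblue : ∀ r ∈ R, Set.InjOn SlopedLine.level {b | b ∈ B ∧ Meets r b})
    (hdeg_red : ∀ r ∈ R, s ≤ (B.filter (Meets r)).card)
    (hSR : S ⊆ R) (hS : (3 * e + 1) * S.card < (e + 1) ^ 3)
    (hdeg_blue : ∀ b ∈ B, 3 * e < (S.filter (Meets · b)).card)
    (hR : 7 * (3 * e) ^ 2 < R.card) (hs : 6 * e + 1 < s) :
    ∃ b ∈ B, ∃ b₁ ∈ B, b₁.level ≠ b.level ∧
      s ≤ 6 * e + (B.filter (CollinearParams b b₁)).card := by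
  obtain ⟨f, hf, hdegf, hfR, hfB⟩ := exists_ne_zero_restrict_eq_zero hred hblue hdeg_red hSR hS
    hdeg_blue (by omega)
  obtain ⟨P, hP, hPf, hcurv, hPx, W, hWR, hWP, hWcard⟩ :=
    exists_irreducible_dvd_curvature hf hdegf hchar hred hfR hR
  have hdegP : P.totalDegree ≤ 3 * e := (totalDegree_le_of_dvd_of_isDomain hPf hf).trans hdegf
  obtain ⟨g, hg, hPg⟩ :=
    (FiniteMultiplicity.of_not_isUnit hP.not_isUnit hf).exists_eq_pow_mul_and_not_dvd
  have hdegg : (g * pderiv 0 P).totalDegree ≤ 6 * e := by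
    have := totalDegree_mul g (pderiv 0 P)
    have := (totalDegree_le_of_dvd_of_isDomain (Dvd.intro_left _ hg.symm) hf).trans hdegf
    have := totalDegree_pderiv_le 0 P
    omega
  obtain ⟨r, hrW, hr⟩ := exists_restrictRed_ne_zero (f := g * pderiv 0 P) hP
    (hP.prime.not_dvd_mul hPg hPx) (hred.mono hWR) hWP
    (by nlinarith [Nat.mul_le_mul_left (2 * P.totalDegree) hdegg])
  set G := (B.filter (Meets r)).filter fun b => restrictBlue b (g * pderiv 0 P) ≠ 0 with hG
  have hcard : s ≤ 6 * e + G.card := (hdeg_red r (hWR hrW)).trans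
    (le_add_card_filter_restrictBlue_ne_zero (hblue r (hWR hrW)) hdegg hr)
  have hGP : ∀ b ∈ G, b ∈ B ∧ Meets r b ∧ restrictBlue b P = 0 ∧
      restrictBlue b (pderiv 0 P) ≠ 0 := by
    intro b hb
    simp only [hG, Finset.mem_filter, map_mul, ne_eq, mul_eq_zero, not_or] at hb
    refine ⟨hb.1.1, hb.1.2, ?_, hb.2.2⟩
    have hfb := hfB b hb.1.1
    rw [hg, map_mul, map_pow] at hfb
    exact eq_zero_of_pow_eq_zero ((mul_eq_zero.1 hfb).resolve_right hb.2.1)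
  obtain ⟨b, hb, b₁, hb₁, hne⟩ := Finset.one_lt_card.1 (show 1 < G.card by omega)
  obtain ⟨hbB, hbr, hbP, hbx⟩ := hGP b hb
  obtain ⟨hb₁B, hb₁r, hb₁P, -⟩ := hGP b₁ hb₁
  refine ⟨b, hbB, b₁, hb₁B, fun h => hne ?_, hcard.trans (Nat.add_le_add_left ?_ _)⟩
  · exact (hblue r (hWR hrW) ⟨hb₁B, hb₁r⟩ ⟨hbB, hbr⟩ h).symm
  · refine Finset.card_le_card fun b₂ hb₂ => Finset.mem_filter.2 ⟨(hGP b₂ hb₂).1, ?_⟩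
    exact collinearParams_of_dvd_curvature hP (fun n hn hnP => hchar n hn (hnP.trans hdegP))
      hPx hcurv hbP hb₁P (hGP b₂ hb₂).2.2.1 hbx

end TwoFamilies

section BipartiteGraphs

variable {α β κ : Type*}

open Classical in
theorem exists_forall_le_degree_of_mul_card_lt_sum {s : ℕ} {R : Finset α} {B : Finset β}
    (rel : α → β → Prop)
    (h : s * (R.card + B.card) < ∑ r ∈ R, (B.filter (rel r)).card) :
    ∃ R' ⊆ R, ∃ B' ⊆ B, R'.Nonempty ∧ (∀ r ∈ R', s ≤ (B'.filter (rel r)).card) ∧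
      ∀ b ∈ B', s ≤ (R'.filter (rel · b)).card := by
  obtain ⟨⟨R', B'⟩, hmem, hmin⟩ := Finset.exists_minimal
    (s := (R.powerset ×ˢ B.powerset).filter fun X : Finset α × Finset β =>
      s * (X.1.card + X.2.card) < ∑ r ∈ X.1, (X.2.filter (rel r)).card)
    ⟨(R, B), by simpa using h⟩
  simp only [Finset.mem_filter, Finset.mem_product, Finset.mem_powerset] at hmem hmin
  obtain ⟨⟨hR, hB⟩, hdense⟩ := hmem
  refine ⟨R', hR, B', hB, ?_, fun r hr => ?_, fun b hb => ?_⟩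
  · rw [Finset.nonempty_iff_ne_empty]
    rintro rfl
    simp at hdense
  · by_contra! hlow
    have hcard := Finset.card_erase_add_one hr
    have hsum := Finset.add_sum_erase R' (fun r => (B'.filter (rel r)).card) hr
    have hle := hmin (y := (R'.erase r, B')) ⟨⟨(R'.erase_subset r).trans hR, hB⟩, by
      dsimp only; nlinarith⟩ ⟨R'.erase_subset r, subset_rfl⟩
    exact R'.notMem_erase r (hle.1 hr)
  · by_contra! hlow
    have hdouble (B : Finset β) : ∑ r ∈ R', (B.filter (rel r)).card =
        ∑ b ∈ B, (R'.filter (rel · b)).card :=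
      Finset.sum_card_bipartiteAbove_eq_sum_card_bipartiteBelow rel
    have hcard := Finset.card_erase_add_one hb
    have hsum := Finset.add_sum_erase B' (fun b => (R'.filter (rel · b)).card) hb
    have hle := hmin (y := (R', B'.erase b)) ⟨⟨hR, (B'.erase_subset b).trans hB⟩, by
      dsimp only; rw [hdouble] at hdense ⊢; nlinarith⟩ ⟨subset_rfl, B'.erase_subset b⟩
    exact B'.notMem_erase b (hle.2 hb)

lemma sum_half_pow_card_filter_eq [Fintype α] [DecidableEq α] [Fintype κ] [DecidableEq κ]
    [Nonempty κ] (N : Finset α) (i : κ) :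
    ∑ f : α → κ, (1 / 2 : ℝ) ^ (N.filter (f · = i)).card =
      Fintype.card (α → κ) * (1 - 1 / (2 * Fintype.card κ)) ^ N.card := by
  have hκ : (Fintype.card κ : ℝ) ≠ 0 := by simp
  calc ∑ f : α → κ, (1 / 2 : ℝ) ^ (N.filter (f · = i)).card
      = ∑ f : α → κ, ∏ r, if r ∈ N ∧ f r = i then (1 / 2 : ℝ) else 1 := by
        refine Finset.sum_congr rfl fun f _ => ?_
        rw [Finset.prod_ite, Finset.prod_const, Finset.prod_const_one, mul_one]
        congr 2
        ext r
        simp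
    _ = ∏ r : α, ∑ k : κ, if r ∈ N ∧ k = i then (1 / 2 : ℝ) else 1 :=
        (Fintype.prod_sum fun r k => if r ∈ N ∧ k = i then (1 / 2 : ℝ) else 1).symm
    _ = ∏ r : α, Fintype.card κ * if r ∈ N then (1 - 1 / (2 * Fintype.card κ) : ℝ) else 1 := by
        refine Finset.prod_congr rfl fun r _ => ?_
        have hite (k : κ) :
            (if k = i then (1 / 2 : ℝ) else 1) = 1 - if k = i then 1 / 2 else 0 := by
          split_ifs <;> norm_num
        by_cases hr : r ∈ N
        · simp only [hr, true_and, if_true, hite, Finset.sum_sub_distrib, Finset.sum_const,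
            Finset.card_univ, nsmul_eq_mul, mul_one, Finset.sum_ite_eq', Finset.mem_univ]
          field_simp
        · simp [hr]
    _ = Fintype.card (α → κ) * (1 - 1 / (2 * Fintype.card κ)) ^ N.card := by
        rw [Finset.prod_mul_distrib, Finset.prod_ite_mem]
        simp

theorem exists_coloring_sum_half_pow_le [Finite α] [Fintype κ] [DecidableEq κ] [Nonempty κ]
    (B : Finset β) (N : β → Finset α) :
    ∃ f : α → κ, ∑ b ∈ B, ∑ i, (1 / 2 : ℝ) ^ ((N b).filter (f · = i)).card ≤
      ∑ b ∈ B, Fintype.card κ * (1 - 1 / (2 * Fintype.card κ) : ℝ) ^ (N b).card := by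
  classical
  have := Fintype.ofFinite α
  suffices havg : ∑ f : α → κ, ∑ b ∈ B, ∑ i, (1 / 2 : ℝ) ^ ((N b).filter (f · = i)).card =
      ∑ _f : α → κ, ∑ b ∈ B, Fintype.card κ * (1 - 1 / (2 * Fintype.card κ) : ℝ) ^ (N b).card by
    obtain ⟨f, -, hf⟩ := Finset.exists_le_of_sum_le Finset.univ_nonempty havg.le
    exact ⟨f, hf⟩
  rw [Finset.sum_comm, Finset.sum_const, Finset.smul_sum]
  refine Finset.sum_congr rfl fun b _ => ?_
  rw [Finset.sum_comm, Finset.sum_congr rfl fun i _ => sum_half_pow_card_filter_eq (N b) i,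
    Finset.sum_const, Finset.card_univ, Finset.card_univ, nsmul_eq_mul, nsmul_eq_mul]
  ring

lemma one_sub_inv_pow_le_half {n : ℕ} (hn : n ≠ 0) : (1 - 1 / n : ℝ) ^ n ≤ 1 / 2 :=
  calc (1 - 1 / n : ℝ) ^ n ≤ Real.exp (-1) :=
        Real.one_sub_div_pow_le_exp_neg (by exact_mod_cast Nat.one_le_iff_ne_zero.2 hn)
    _ ≤ 1 / 2 := by
        rw [Real.exp_neg, one_div]
        exact inv_anti₀ two_pos (by linarith [Real.add_one_le_exp 1])

lemma exists_coloring_forall_lt_card {n d k : ℕ} [NeZero n] [Finite α] {B : Finset β}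
    {N : β → Finset α} (hB : n * B.card < 2 ^ k)
    (hN : ∀ b ∈ B, 2 * n * (d + k) ≤ (N b).card) :
    ∃ f : α → Fin n, ∀ b ∈ B, ∀ i, d < ((N b).filter (f · = i)).card := by
  obtain ⟨f, hf⟩ := exists_coloring_sum_half_pow_le (κ := Fin n) B N
  rw [Fintype.card_fin] at hf
  have hn : n ≠ 0 := NeZero.ne n
  have hbase : (0 : ℝ) ≤ 1 - 1 / (2 * n) := by
    rw [sub_nonneg, div_le_one (by positivity)]
    exact_mod_cast (show 1 ≤ 2 * n by omega)
  have hterm : ∀ b ∈ B, (n : ℝ) * (1 - 1 / (2 * n)) ^ (N b).card ≤ n * (1 / 2) ^ (d + k) := by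
    intro b hb
    gcongr
    calc (1 - 1 / (2 * n) : ℝ) ^ (N b).card ≤ (1 - 1 / (2 * n)) ^ (2 * n * (d + k)) :=
          pow_le_pow_of_le_one hbase (by simp) (hN b hb)
      _ ≤ (1 / 2) ^ (d + k) := by
          rw [pow_mul]
          have := one_sub_inv_pow_le_half (n := 2 * n) (by omega)
          push_cast at this
          gcongr
  have hsum : ∑ b ∈ B, ∑ i, (1 / 2 : ℝ) ^ ((N b).filter (f · = i)).card < (1 / 2) ^ d := by
    calc _ ≤ _ := hf
      _ ≤ ∑ b ∈ B, (n : ℝ) * (1 / 2) ^ (d + k) := Finset.sum_le_sum hterm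
      _ = (n * B.card) * (1 / 2) ^ k * (1 / 2) ^ d := by
          rw [Finset.sum_const, nsmul_eq_mul, pow_add]; ring
      _ < 2 ^ k * (1 / 2) ^ k * (1 / 2) ^ d := by
          gcongr
          exact_mod_cast hB
      _ = (1 / 2) ^ d := by rw [← mul_pow]; norm_num
  refine ⟨f, fun b hb i => (pow_lt_pow_iff_right_of_lt_one₀ one_half_pos one_half_lt_one).1
    (lt_of_le_of_lt ?_ hsum)⟩
  exact (Finset.single_le_sum (f := fun i => (1 / 2 : ℝ) ^ ((N b).filter (f · = i)).card)
    (fun i _ => by positivity) (Finset.mem_univ i)).trans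
    (Finset.single_le_sum (f := fun b => ∑ i, (1 / 2 : ℝ) ^ ((N b).filter (f · = i)).card)
    (fun b _ => by positivity) hb)

open Classical in
theorem exists_sample_forall_lt_card {n d k : ℕ} (hn : n ≠ 0) (rel : α → β → Prop)
    {R : Finset α} {B : Finset β} (hB : n * B.card < 2 ^ k)
    (hrel : ∀ b ∈ B, 2 * n * (d + k) ≤ (R.filter (rel · b)).card) :
    ∃ S ⊆ R, n * S.card ≤ R.card ∧ ∀ b ∈ B, d < (S.filter (rel · b)).card := by
  have : NeZero n := ⟨hn⟩
  obtain ⟨f, hf⟩ := exists_coloring_forall_lt_card (α := R)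
    (N := fun b => Finset.univ.filter (rel ·.1 b)) hB fun b hb => by
      rw [Finset.univ_eq_attach, Finset.filter_attach (rel · b)]
      simpa using hrel b hb
  obtain ⟨i, hi⟩ := Fintype.exists_card_fiber_le_of_card_le_nsmul f
    (b := (R.card / n : ℝ)) (by simp [mul_div_cancel₀, hn])
  refine ⟨(Finset.univ.filter (f · = i)).map (Function.Embedding.subtype _), ?_, ?_, ?_⟩
  · exact Finset.map_subtype_subset _
  · rw [Finset.card_map]
    rw [le_div_iff₀' (by positivity)] at hi
    exact_mod_cast hi
  · intro b hb
    rw [Finset.filter_map, Finset.card_map, Finset.filter_comm]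
    exact hf b hb i

end BipartiteGraphs

open Classical in
theorem sum_card_filter_meets_le {K : Type*} [Field K] [Infinite K] {R B : Finset (SlopedLine K)}
    {s q : ℕ} (hchar : ∀ n : ℕ, n ≠ 0 → n ^ 2 ≤ R.card → (n : K) ≠ 0)
    (hred : Set.InjOn SlopedLine.level (R : Set (SlopedLine K)))
    (hblue : ∀ r ∈ R, Set.InjOn SlopedLine.level {b | b ∈ B ∧ Meets r b})
    (hRq : R.card ≤ q ^ 2) (hBq : B.card ≤ q ^ 2) (hsq : 12000 * q ≤ s)
    (hcollinear : ∀ b ∈ B, ∀ b₁ ∈ B, b₁.level ≠ b.level →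
      2 * (B.filter (CollinearParams b b₁)).card ≤ s) :
    ∑ r ∈ R, (B.filter (Meets r)).card ≤ s * (R.card + B.card) := by
  by_contra! hdense
  obtain ⟨R', hR', B', hB', hne, hdeg_red, hdeg_blue⟩ :=
    exists_forall_le_degree_of_mul_card_lt_sum Meets hdense
  have hR'card := Finset.card_le_card hR'
  have hB'card := Finset.card_le_card hB'
  have hpos := hne.card_pos
  set e := Nat.sqrt (R'.card / 100)
  have he : 100 * e ^ 2 ≤ R'.card := by
    have : e ^ 2 ≤ R'.card / 100 := Nat.sqrt_le' _
    omega
  have he' : R'.card < 100 * (e + 1) ^ 2 := by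
    have : R'.card / 100 < (e + 1) ^ 2 := Nat.lt_succ_sqrt' _
    omega
  have hq : 0 < q := by
    by_contra! h
    simp_all
  have heq : e ≤ q := by nlinarith
  have hpow : 300 * B'.card < 2 ^ (9 + 2 * q) := by
    have : q ^ 2 < (2 ^ q) ^ 2 := Nat.pow_lt_pow_left Nat.lt_two_pow_self two_ne_zero
    rw [pow_add, pow_mul', show 2 ^ 9 = 512 by norm_num]
    omega
  obtain ⟨S, hSR, hScard, hSdeg⟩ := exists_sample_forall_lt_card (n := 300) (d := 3 * e)
    (by norm_num) Meets hpow fun b hb => le_trans (by omega) (hdeg_blue b hb)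
  obtain ⟨b, hb, b₁, hb₁, hlevel, hcard⟩ := exists_collinearParams_of_rich
    (fun n hn hne => hchar n hn (by nlinarith)) (hred.mono hR')
    (fun r hr => (hblue r (hR' hr)).mono fun _ hb => And.imp_left (@hB' _) hb)
    hdeg_red hSR (by nlinarith) hSdeg (by nlinarith) (by omega)
  have := hcollinear b (hB' hb) b₁ (hB' hb₁) hlevel
  have := Finset.card_le_card (Finset.filter_subset_filter (CollinearParams b b₁) hB')
  omega

section GeneralPosition

variable {F : Type*} [Field F]

theorem ratFunc_quadratic_eq_zero {a b c : F}
    (h : RatFunc.C a + RatFunc.C b * RatFunc.X + RatFunc.C c * RatFunc.X ^ 2 = 0) :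
    a = 0 ∧ b = 0 ∧ c = 0 := by
  have hpoly : Polynomial.C a + Polynomial.C b * Polynomial.X
      + Polynomial.C c * Polynomial.X ^ 2 = 0 := by
    apply IsFractionRing.injective F[X] (RatFunc F)
    simpa only [map_add, map_mul, map_pow, map_zero, RatFunc.algebraMap_C, RatFunc.algebraMap_X]
      using h
  have hcoeff (i : ℕ) := congrArg (Polynomial.coeff · i) hpoly
  exact ⟨by simpa using hcoeff 0, by simpa [Polynomial.coeff_X, Polynomial.coeff_C] using hcoeff 1,
    by simpa [Polynomial.coeff_X, Polynomial.coeff_C] using hcoeff 2⟩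

theorem ratFunc_C_add_X_ne_zero (m : F) : RatFunc.C m + RatFunc.X ≠ 0 := by
  intro h
  have hcoeff := ratFunc_quadratic_eq_zero (a := m) (b := 1) (c := 0) (by simpa using h)
  exact one_ne_zero hcoeff.2.1

/-- The red line over `F(θ)` attached to a triple `(a, m, c)`, that is, to a point `a` and a line
`y = m x + c`. Together with `blueLine` it encodes the collision relation of
`meets_redLine_blueLine`; the transcendental `θ` puts the levels in general position. -/
noncomputable def redLine (x : F × F × F) : SlopedLine (RatFunc F) where
  slope := RatFunc.C x.2.1
  intercept := -RatFunc.C x.1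
  level := RatFunc.C x.2.2 + RatFunc.C x.1 * RatFunc.X + RatFunc.C x.2.1 * RatFunc.X ^ 2

/-- The blue line over `F(θ)` attached to a triple `(a, m, c)`; see `redLine`. -/
noncomputable def blueLine (y : F × F × F) : SlopedLine (RatFunc F) where
  slope := -1 / (RatFunc.C y.2.1 + RatFunc.X)
  intercept := RatFunc.C y.2.2 / (RatFunc.C y.2.1 + RatFunc.X)
  level := (RatFunc.C y.1 - RatFunc.X ^ 2) / (RatFunc.C y.2.1 + RatFunc.X)

theorem meets_redLine_blueLine (x y : F × F × F) :
    Meets (redLine x) (blueLine y) ↔ y.2.1 * x.1 + y.2.2 = x.2.1 * y.1 + x.2.2 := by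
  have hden := ratFunc_C_add_X_ne_zero y.2.1
  rw [← (RatFunc.C (K := F)).injective.eq_iff]
  simp only [Meets, redLine, blueLine, map_add, map_mul]
  constructor <;> intro h
  · field_simp at h
    linear_combination -h
  · field_simp
    linear_combination -h

theorem redLine_level_injective :
    Function.Injective fun x : F × F × F => (redLine x).level := by
  intro x y h
  simp only [redLine] at h
  obtain ⟨hc, ha, hm⟩ := ratFunc_quadratic_eq_zero
    (a := x.2.2 - y.2.2) (b := x.1 - y.1) (c := x.2.1 - y.2.1)
    (by simp only [map_sub]; linear_combination h)
  exact Prod.ext (sub_eq_zero.1 ha) (Prod.ext (sub_eq_zero.1 hm) (sub_eq_zero.1 hc))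

theorem redLine_injective : Function.Injective (redLine (F := F)) :=
  redLine_level_injective.of_comp (f := SlopedLine.level)

theorem blueLine_level_eq_iff {x y : F × F × F} :
    (blueLine x).level = (blueLine y).level ↔ x.1 = y.1 ∧ x.2.1 = y.2.1 := by
  constructor
  · intro h
    rw [blueLine, blueLine,
      div_eq_div_iff (ratFunc_C_add_X_ne_zero _) (ratFunc_C_add_X_ne_zero _)] at h
    have hcoeff := ratFunc_quadratic_eq_zero
      (a := x.1 * y.2.1 - y.1 * x.2.1) (b := x.1 - y.1) (c := x.2.1 - y.2.1)
      (by simp only [map_sub, map_mul]; linear_combination h)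
    exact ⟨sub_eq_zero.1 hcoeff.2.1, sub_eq_zero.1 hcoeff.2.2⟩
  · rintro ⟨ha, hm⟩
    rw [blueLine, blueLine, ha, hm]

theorem blueLine_injective : Function.Injective (blueLine (F := F)) := by
  intro x y h
  obtain ⟨ha, hm⟩ := blueLine_level_eq_iff.1 (congrArg SlopedLine.level h)
  have hintercept := congrArg SlopedLine.intercept h
  rw [blueLine, blueLine, hm, div_left_inj' (ratFunc_C_add_X_ne_zero _)] at hintercept
  exact Prod.ext ha (Prod.ext hm ((RatFunc.C (K := F)).injective hintercept))

/-- The triples `x`, `y`, `z` lie on a common line of `F³`: all `2 × 2` minors of the matrix with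
rows `y - x` and `z - x` vanish. -/
def CollinearTriples (x y z : F × F × F) : Prop :=
  (y.1 - x.1) * (z.2.1 - x.2.1) = (z.1 - x.1) * (y.2.1 - x.2.1) ∧
  (y.1 - x.1) * (z.2.2 - x.2.2) = (z.1 - x.1) * (y.2.2 - x.2.2) ∧
  (y.2.1 - x.2.1) * (z.2.2 - x.2.2) = (z.2.1 - x.2.1) * (y.2.2 - x.2.2)

instance [DecidableEq F] (x y : F × F × F) : DecidablePred (CollinearTriples x y) :=
  fun _ => inferInstanceAs (Decidable (_ ∧ _))

theorem collinearTriples_of_collinearParams_blueLine {x y z : F × F × F}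
    (h : CollinearParams (blueLine x) (blueLine y) (blueLine z)) : CollinearTriples x y z := by
  have hx := ratFunc_C_add_X_ne_zero x.2.1
  have hy := ratFunc_C_add_X_ne_zero y.2.1
  have hz := ratFunc_C_add_X_ne_zero z.2.1
  obtain ⟨hslope, hintercept⟩ := h
  simp only [blueLine] at hslope hintercept
  field_simp at hslope hintercept
  have ham : (y.1 - x.1) * (z.2.1 - x.2.1) - (z.1 - x.1) * (y.2.1 - x.2.1) = 0 := by
    apply (RatFunc.C (K := F)).injective
    apply mul_left_cancel₀ hx
    simp only [map_sub, map_mul, map_zero]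
    linear_combination hslope
  set ac := (y.1 - x.1) * (z.2.2 - x.2.2) - (z.1 - x.1) * (y.2.2 - x.2.2) with hac
  set mc := (y.2.1 - x.2.1) * (z.2.2 - x.2.2) - (z.2.1 - x.2.1) * (y.2.2 - x.2.2) with hmc
  have hcombination : (RatFunc.C x.2.1 + RatFunc.X) * RatFunc.C ac =
      (RatFunc.C x.1 - RatFunc.X ^ 2) * RatFunc.C mc := by
    have hamC := congrArg RatFunc.C ham
    apply mul_left_cancel₀ hx
    simp only [hac, hmc, map_sub, map_mul, map_zero] at hamC ⊢
    linear_combination hintercept + (RatFunc.C x.2.1 + RatFunc.X) * RatFunc.C x.2.2 * hamC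
  obtain ⟨-, hac₀, hmc₀⟩ := ratFunc_quadratic_eq_zero
    (a := x.2.1 * ac - x.1 * mc) (b := ac) (c := mc)
    (by simp only [map_sub, map_mul]; linear_combination hcombination)
  exact ⟨sub_eq_zero.1 ham, sub_eq_zero.1 hac₀, sub_eq_zero.1 hmc₀⟩

end GeneralPosition

section CauchySchwarz

variable {α β : Type*} [DecidableEq β] (s : Finset α) (t : Finset β) (f : α → β)

theorem sum_sq_card_fiber_le :
    ∑ y ∈ t, (s.filter (f · = y)).card ^ 2 ≤ ∑ x ∈ s, (s.filter (f · = f x)).card :=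
  calc ∑ y ∈ t, (s.filter (f · = y)).card ^ 2
      = ∑ y ∈ t, ∑ x ∈ s with f x = y, (s.filter (f · = f x)).card := by
        refine Finset.sum_congr rfl fun y _ => ?_
        rw [sq, ← smul_eq_mul, ← Finset.sum_const]
        refine Finset.sum_congr rfl fun x hx => ?_
        rw [(Finset.mem_filter.1 hx).2]
    _ = ∑ x ∈ s with f x ∈ t, (s.filter (f · = f x)).card :=
        Finset.sum_fiberwise_eq_sum_filter s t f _
    _ ≤ ∑ x ∈ s, (s.filter (f · = f x)).card :=
        Finset.sum_le_sum_of_subset (Finset.filter_subset _ _)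

theorem sq_card_filter_mem_le :
    (s.filter (f · ∈ t)).card ^ 2 ≤ t.card * ∑ x ∈ s, (s.filter (f · = f x)).card := by
  rw [← Finset.sum_card_fiberwise_eq_card_filter]
  exact sq_sum_le_card_mul_sum_sq.trans (Nat.mul_le_mul_left _ (sum_sq_card_fiber_le s t f))

end CauchySchwarz

section RichLines

variable {F : Type*} [Field F]

theorem line_eq_of_two_points {l l' : F × F} {x x' : F} (hne : x' ≠ x)
    (hx : l.1 * x + l.2 = l'.1 * x + l'.2) (hx' : l.1 * x' + l.2 = l'.1 * x' + l'.2) : l = l' := by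
  have hslope : l.1 = l'.1 := by
    apply mul_right_cancel₀ (sub_ne_zero.2 hne)
    linear_combination hx' - hx
  rw [hslope] at hx
  exact Prod.ext hslope (add_left_cancel hx)

variable [DecidableEq F] {A : Finset F} {L : Finset (F × F)} {k : ℕ}

/-- The number of points of the grid `A × A` on the line `y = l.1 * x + l.2`. -/
def richness (A : Finset F) (l : F × F) : ℕ :=
  (A.filter fun a => l.1 * a + l.2 ∈ A).card

theorem card_filter_through_mul_pred_le (hL : ∀ l ∈ L, k ≤ richness A l) (x₀ y₀ : F) :
    (L.filter fun l => l.1 * x₀ + l.2 = y₀).card * (k - 1) ≤ A.card ^ 2 := by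
  rw [sq, ← Finset.card_product, ← mul_one (A ×ˢ A).card]
  refine Finset.card_mul_le_card_mul
    (fun (l : F × F) (q : F × F) => q.1 ≠ x₀ ∧ l.1 * q.1 + l.2 = q.2) (fun l hl => ?_)
    fun q _ => Finset.card_le_one.2 fun l hl l' hl' => ?_
  · have herase : k - 1 ≤ ((A.filter fun a => l.1 * a + l.2 ∈ A).erase x₀).card :=
      (Nat.sub_le_sub_right (hL l (Finset.mem_filter.1 hl).1) 1).trans
        Finset.pred_card_le_card_erase
    refine herase.trans (Finset.card_le_card_of_injOn (fun a => (a, l.1 * a + l.2)) ?_ ?_)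
    · intro a ha
      simp_all [Finset.bipartiteAbove]
    · exact fun a _ a' _ h => congrArg Prod.fst h
  · simp only [Finset.bipartiteBelow, Finset.mem_filter] at hl hl'
    exact line_eq_of_two_points hl.2.1 (hl.1.2.trans hl'.1.2.symm) (hl.2.2.trans hl'.2.2.symm)

theorem card_filter_collinearTriples_le {x y : F × F × F} (h : y.1 ≠ x.1) :
    ((A ×ˢ L).filter (CollinearTriples x y)).card ≤ A.card := by
  refine Finset.card_le_card_of_injOn Prod.fst
    (fun z hz => (Finset.mem_product.1 (Finset.mem_filter.1 hz).1).1) fun z hz z' hz' hzz' => ?_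
  obtain ⟨hm, hc, -⟩ := (Finset.mem_filter.1 hz).2
  obtain ⟨hm', hc', -⟩ := (Finset.mem_filter.1 hz').2
  rw [hzz', ← hm', mul_right_inj' (sub_ne_zero.2 h), sub_left_inj] at hm
  rw [hzz', ← hc', mul_right_inj' (sub_ne_zero.2 h), sub_left_inj] at hc
  exact Prod.ext hzz' (Prod.ext hm hc)

theorem card_filter_collinearTriples_mul_pred_le (hL : ∀ l ∈ L, k ≤ richness A l)
    {x y : F × F × F} (h : y.1 = x.1) (hslope : y.2.1 ≠ x.2.1) :
    ((A ×ˢ L).filter (CollinearTriples x y)).card * (k - 1) ≤ A.card ^ 2 := by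
  have hslope' := sub_ne_zero.2 hslope
  obtain ⟨x₀, hx₀⟩ : ∃ x₀, (y.2.1 - x.2.1) * x₀ = -(y.2.2 - x.2.2) :=
    ⟨-(y.2.2 - x.2.2) / (y.2.1 - x.2.1), mul_div_cancel₀ _ hslope'⟩
  refine le_trans (Nat.mul_le_mul_right _ ?_)
    (card_filter_through_mul_pred_le hL x₀ (x.2.1 * x₀ + x.2.2))
  refine Finset.card_le_card_of_injOn Prod.snd (fun z hz => ?_) fun z hz z' hz' hzz' => ?_
  · obtain ⟨hmem, -, -, hmc⟩ := Finset.mem_filter.1 hz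
    refine Finset.mem_filter.2 ⟨(Finset.mem_product.1 hmem).2, ?_⟩
    apply mul_left_cancel₀ hslope'
    linear_combination hmc + (z.2.1 - x.2.1) * hx₀
  · have hfst {w : F × F × F} (hw : CollinearTriples x y w) : w.1 = x.1 := by
      have hm := hw.1
      rw [h, sub_self, zero_mul, eq_comm, mul_eq_zero, or_iff_left hslope'] at hm
      exact sub_eq_zero.1 hm
    exact Prod.ext ((hfst (Finset.mem_filter.1 hz).2).trans (hfst (Finset.mem_filter.1 hz').2).symm)
      hzz'

theorem mul_card_filter_collinearTriples_le (hk : 2 ≤ k) (hkA : k ≤ A.card)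
    (hL : ∀ l ∈ L, k ≤ richness A l) {x y : F × F × F} (h : ¬ (y.1 = x.1 ∧ y.2.1 = x.2.1)) :
    k * ((A ×ˢ L).filter (CollinearTriples x y)).card ≤ 2 * A.card ^ 2 := by
  by_cases hfst : y.1 = x.1
  · have hcard := card_filter_collinearTriples_mul_pred_le hL hfst fun hm => h ⟨hfst, hm⟩
    calc k * ((A ×ˢ L).filter (CollinearTriples x y)).card
        ≤ 2 * (k - 1) * ((A ×ˢ L).filter (CollinearTriples x y)).card := by gcongr; lia
      _ = 2 * (((A ×ˢ L).filter (CollinearTriples x y)).card * (k - 1)) := by ring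
      _ ≤ 2 * A.card ^ 2 := by gcongr
  · calc k * ((A ×ˢ L).filter (CollinearTriples x y)).card
        ≤ A.card * A.card := Nat.mul_le_mul hkA (card_filter_collinearTriples_le hfst)
      _ ≤ 2 * A.card ^ 2 := by nlinarith

theorem sum_card_filter_collision_le {s q : ℕ} (hk : 2 ≤ k) (hkA : k ≤ A.card)
    (hL : ∀ l ∈ L, k ≤ richness A l)
    (hchar : ∀ n : ℕ, n ≠ 0 → n ^ 2 ≤ A.card * L.card → (n : F) ≠ 0)
    (hq : A.card * L.card ≤ q ^ 2) (hsq : 12000 * q ≤ s) (hsk : 4 * A.card ^ 2 ≤ s * k) :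
    ∑ x ∈ A ×ˢ L, ((A ×ˢ L).filter fun y => y.2.1 * x.1 + y.2.2 = x.2.1 * y.1 + x.2.2).card
      ≤ s * (2 * (A.card * L.card)) := by
  classical
  have : Infinite (RatFunc F) :=
    Infinite.of_injective _ (IsFractionRing.injective (Polynomial F) (RatFunc F))
  have hred : ((A ×ˢ L).image redLine).card = A.card * L.card := by
    rw [Finset.card_image_of_injective _ redLine_injective, Finset.card_product]
  have hblue : ((A ×ˢ L).image blueLine).card = A.card * L.card := by
    rw [Finset.card_image_of_injective _ blueLine_injective, Finset.card_product]
  have key := sum_card_filter_meets_le (R := (A ×ˢ L).image redLine) (B := (A ×ˢ L).image blueLine)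
    (s := s) (q := q) ?_ ?_ ?_ (hred ▸ hq) (hblue ▸ hq) hsq ?_
  · rw [Finset.sum_image redLine_injective.injOn, hred, hblue, ← two_mul] at key
    simpa only [Finset.filter_image, Finset.card_image_of_injective _ blueLine_injective,
      meets_redLine_blueLine] using key
  · intro n hn hle
    rw [← map_natCast (RatFunc.C (K := F)), map_ne_zero]
    exact hchar n hn (hred ▸ hle)
  · rw [Finset.coe_image]
    rintro _ ⟨x, -, rfl⟩ _ ⟨x', -, rfl⟩ h
    rw [redLine_level_injective h]
  · simp only [Finset.mem_image]
    rintro _ ⟨x, -, rfl⟩ _ ⟨⟨y, -, rfl⟩, hy⟩ _ ⟨⟨y', -, rfl⟩, hy'⟩ h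
    rw [meets_redLine_blueLine] at hy hy'
    obtain ⟨ha, hm⟩ := blueLine_level_eq_iff.1 h
    rw [ha, hm, ← hy'] at hy
    rw [Prod.ext ha (Prod.ext hm (add_left_cancel hy))]
  · simp only [Finset.mem_image]
    rintro _ ⟨x, -, rfl⟩ _ ⟨y, -, rfl⟩ hne
    rw [Ne, blueLine_level_eq_iff] at hne
    rw [Finset.filter_image, Finset.card_image_of_injective _ blueLine_injective]
    have hcard : k * ((A ×ˢ L).filter fun z =>
        CollinearParams (blueLine x) (blueLine y) (blueLine z)).card ≤ 2 * A.card ^ 2 :=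
      le_trans (Nat.mul_le_mul_left _ (Finset.card_le_card (Finset.monotone_filter_right _
        fun _ _ => collinearTriples_of_collinearParams_blueLine)))
        (mul_card_filter_collinearTriples_le hk hkA hL hne)
    exact Nat.le_of_mul_le_mul_left (by linarith) (by lia : 0 < k)

theorem sum_card_filter_collision_eq (A : Finset F) (L : Finset (F × F)) :
    ∑ x ∈ A ×ˢ L, ((A ×ˢ L).filter fun y => y.2.1 * x.1 + y.2.2 = x.2.1 * y.1 + x.2.2).card =
      ∑ x ∈ A ×ˢ L, ((A ×ˢ L).filter fun y => y.2.1 * y.1 + y.2.2 = x.2.1 * x.1 + x.2.2).card := by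
  simp only [Finset.card_filter, Finset.sum_product]
  refine Finset.sum_congr rfl fun a _ => ?_
  rw [Finset.sum_comm, Finset.sum_comm (s := L) (t := A)]
  refine Finset.sum_congr rfl fun a' _ => ?_
  rw [Finset.sum_comm]
  simp only [eq_comm]

theorem sq_mul_card_le (hL : ∀ l ∈ L, k ≤ richness A l) :
    (k * L.card) ^ 2 ≤ A.card * ∑ x ∈ A ×ˢ L,
      ((A ×ˢ L).filter fun y => y.2.1 * x.1 + y.2.2 = x.2.1 * y.1 + x.2.2).card := by
  have hrich : k * L.card ≤ ((A ×ˢ L).filter fun x => x.2.1 * x.1 + x.2.2 ∈ A).card :=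
    calc k * L.card = L.card • k := by rw [smul_eq_mul, mul_comm]
      _ ≤ ∑ l ∈ L, richness A l := Finset.card_nsmul_le_sum _ _ _ hL
      _ = ((A ×ˢ L).filter fun x => x.2.1 * x.1 + x.2.2 ∈ A).card := by
        simp only [richness, Finset.card_filter, Finset.sum_product_right]
  rw [sum_card_filter_collision_eq]
  exact (Nat.pow_le_pow_left hrich 2).trans (sq_card_filter_mem_le _ _ _)

theorem mul_pow_four_le_of_sq_mul_le {k n N q t : ℕ} (hN : 0 < N) (hkn : k ≤ n)
    (h : k ^ 2 * N ≤ 2 * n ^ 2 * (12000 * q + t)) (hq : q ^ 2 ≤ 4 * (n * N))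
    (ht : k * t ≤ 5 * n ^ 2) : N * k ^ 4 ≤ 10 ^ 10 * n ^ 5 := by
  rcases le_total t (12000 * q) with htq | htq
  · have hkN : k ^ 2 * N ≤ 48000 * n ^ 2 * q := by nlinarith
    apply Nat.le_of_mul_le_mul_right _ hN
    calc N * k ^ 4 * N = (k ^ 2 * N) ^ 2 := by ring
      _ ≤ (48000 * n ^ 2 * q) ^ 2 := Nat.pow_le_pow_left hkN 2
      _ = 48000 ^ 2 * n ^ 4 * q ^ 2 := by ring
      _ ≤ 48000 ^ 2 * n ^ 4 * (4 * (n * N)) := by gcongr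
      _ = 96000 ^ 2 * n ^ 5 * N := by ring
      _ ≤ 10 ^ 10 * n ^ 5 * N := by gcongr ?_ * _ * _; norm_num
  · have hkN : k ^ 2 * N ≤ 4 * n ^ 2 * t := by nlinarith
    calc N * k ^ 4 = k ^ 2 * N * k * k := by ring
      _ ≤ 4 * n ^ 2 * t * k * n := by gcongr
      _ = 4 * n ^ 3 * (k * t) := by ring
      _ ≤ 4 * n ^ 3 * (5 * n ^ 2) := by gcongr
      _ = 20 * n ^ 5 := by ring
      _ ≤ 10 ^ 10 * n ^ 5 := by gcongr; norm_num

theorem card_mul_pow_four_le (hk : 2 ≤ k) (hL : ∀ l ∈ L, k ≤ richness A l)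
    (hchar : ∀ n : ℕ, n ≠ 0 → n ^ 2 ≤ A.card * L.card → (n : F) ≠ 0) :
    L.card * k ^ 4 ≤ 10 ^ 10 * A.card ^ 5 := by
  rcases L.eq_empty_or_nonempty with rfl | ⟨l₀, hl₀⟩
  · simp
  have hkA : k ≤ A.card := (hL l₀ hl₀).trans (Finset.card_filter_le _ _)
  have hLpos : 0 < L.card := Finset.card_pos.2 ⟨l₀, hl₀⟩
  obtain ⟨q, hq⟩ : ∃ q, q = Nat.sqrt (A.card * L.card) + 1 := ⟨_, rfl⟩
  obtain ⟨t, ht⟩ : ∃ t, t = 4 * A.card ^ 2 / k + 1 := ⟨_, rfl⟩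
  have hle_q : A.card * L.card ≤ q ^ 2 := hq ▸ (Nat.lt_succ_sqrt' _).le
  have hq_le : q ^ 2 ≤ 4 * (A.card * L.card) := by
    have hsqrt : Nat.sqrt (A.card * L.card) ^ 2 ≤ A.card * L.card := Nat.sqrt_le' _
    have hpos : 1 ≤ Nat.sqrt (A.card * L.card) :=
      Nat.sqrt_pos.2 (Nat.mul_pos (by lia) hLpos)
    rw [hq]
    nlinarith
  have hle_t : 4 * A.card ^ 2 ≤ k * t := ht ▸ (Nat.lt_mul_div_succ _ (by lia)).le
  have ht_le : k * t ≤ 5 * A.card ^ 2 := by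
    rw [ht, mul_add]
    nlinarith [Nat.mul_div_le (4 * A.card ^ 2) k]
  have hcollision := sum_card_filter_collision_le (s := 12000 * q + t) hk hkA hL hchar hle_q
    (by lia) (by nlinarith)
  refine mul_pow_four_le_of_sq_mul_le hLpos hkA (Nat.le_of_mul_le_mul_right ?_ hLpos) hq_le ht_le
  calc k ^ 2 * L.card * L.card = (k * L.card) ^ 2 := by ring
    _ ≤ A.card * ((12000 * q + t) * (2 * (A.card * L.card))) :=
        (sq_mul_card_le hL).trans (Nat.mul_le_mul_left _ hcollision)
    _ = 2 * A.card ^ 2 * (12000 * q + t) * L.card := by ring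

end RichLines

section Moments

variable {F : Type*} [Field F] [DecidableEq F] [Fintype F]

theorem card_filter_map_mem (A : Finset F) (a : F) :
    (Finset.univ.filter fun l : F × F => l.1 * a + l.2 ∈ A).card = Fintype.card F * A.card := by
  rw [← Finset.card_univ, ← Finset.card_product]
  refine Finset.card_nbij' (fun l => (l.1, l.1 * a + l.2)) (fun l => (l.1, l.2 - l.1 * a)) ?_ ?_
    ?_ ?_ <;> simp [Set.MapsTo, Set.LeftInvOn]

theorem card_filter_map_mem_and_map_mem_le (A : Finset F) {a b : F} (hab : a ≠ b) :
    (Finset.univ.filter fun l : F × F => l.1 * a + l.2 ∈ A ∧ l.1 * b + l.2 ∈ A).card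
      ≤ A.card ^ 2 := by
  rw [sq, ← Finset.card_product]
  refine Finset.card_le_card_of_injOn (fun l => (l.1 * a + l.2, l.1 * b + l.2))
    (fun l hl => by simpa using hl) fun l _ l' _ h => ?_
  exact line_eq_of_two_points hab (congrArg Prod.snd h) (congrArg Prod.fst h)

theorem sum_richness (A : Finset F) :
    ∑ l : F × F, richness A l = Fintype.card F * A.card ^ 2 := by
  simp only [richness, Finset.card_filter]
  rw [Finset.sum_comm]
  simp only [← Finset.card_filter, card_filter_map_mem, Finset.sum_const, smul_eq_mul]
  ring

theorem sum_richness_sq_le (A : Finset F) :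
    ∑ l : F × F, richness A l ^ 2 ≤ Fintype.card F * A.card ^ 2 + A.card ^ 4 := by
  have hpairs (l : F × F) : richness A l ^ 2 =
      ∑ a ∈ A, ∑ b ∈ A, if l.1 * a + l.2 ∈ A ∧ l.1 * b + l.2 ∈ A then 1 else 0 := by
    rw [richness, sq, Finset.card_filter, Finset.sum_mul_sum]
    simp only [ite_and, ite_mul, one_mul, zero_mul]
  have hpair (a b : F) :
      (Finset.univ.filter fun l : F × F => l.1 * a + l.2 ∈ A ∧ l.1 * b + l.2 ∈ A).card
        ≤ (if a = b then Fintype.card F * A.card else 0) + A.card ^ 2 := by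
    split_ifs with hab
    · subst hab
      simp only [and_self, card_filter_map_mem, Nat.le_add_right]
    · simpa using card_filter_map_mem_and_map_mem_le A hab
  calc ∑ l : F × F, richness A l ^ 2
      = ∑ a ∈ A, ∑ b ∈ A,
        (Finset.univ.filter fun l : F × F => l.1 * a + l.2 ∈ A ∧ l.1 * b + l.2 ∈ A).card := by
        simp only [hpairs, Finset.card_filter]
        rw [Finset.sum_comm]
        exact Finset.sum_congr rfl fun a _ => Finset.sum_comm
    _ ≤ ∑ a ∈ A, ∑ b ∈ A, ((if a = b then Fintype.card F * A.card else 0) + A.card ^ 2) := by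
        gcongr with a _ b _
        exact hpair a b
    _ = ∑ a ∈ A, (Fintype.card F * A.card + A.card ^ 3) := by
        refine Finset.sum_congr rfl fun a ha => ?_
        rw [Finset.sum_add_distrib, Finset.sum_ite_eq, if_pos ha, Finset.sum_const, smul_eq_mul]
        ring
    _ = Fintype.card F * A.card ^ 2 + A.card ^ 4 := by
        rw [Finset.sum_const, smul_eq_mul]
        ring

theorem sum_sq_card_mul_richness_sub_le (A : Finset F) :
    ∑ l : F × F, (Fintype.card F * richness A l - A.card ^ 2 : ℝ) ^ 2
      ≤ Fintype.card F ^ 3 * A.card ^ 2 := by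
  have hfirst : ∑ l : F × F, (richness A l : ℝ) = Fintype.card F * A.card ^ 2 := by
    exact_mod_cast sum_richness A
  have hsecond : ∑ l : F × F, (richness A l : ℝ) ^ 2 ≤
      Fintype.card F * A.card ^ 2 + A.card ^ 4 := by
    exact_mod_cast sum_richness_sq_le A
  calc ∑ l : F × F, (Fintype.card F * richness A l - A.card ^ 2 : ℝ) ^ 2
      = ∑ l : F × F, ((Fintype.card F : ℝ) ^ 2 * richness A l ^ 2
          - 2 * Fintype.card F * A.card ^ 2 * richness A l + A.card ^ 4) :=
        Finset.sum_congr rfl fun l _ => by ring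
    _ = (Fintype.card F : ℝ) ^ 2 * ∑ l : F × F, (richness A l : ℝ) ^ 2
          - Fintype.card F ^ 2 * A.card ^ 4 := by
        rw [Finset.sum_add_distrib, Finset.sum_sub_distrib, ← Finset.mul_sum, ← Finset.mul_sum,
          hfirst, Finset.sum_const, Finset.card_univ, Fintype.card_prod, nsmul_eq_mul]
        push_cast
        ring
    _ ≤ (Fintype.card F : ℝ) ^ 2 * (Fintype.card F * A.card ^ 2 + A.card ^ 4)
          - Fintype.card F ^ 2 * A.card ^ 4 := by gcongr
    _ = Fintype.card F ^ 3 * A.card ^ 2 := by ring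

theorem card_mul_sq_le {A : Finset F} {L : Finset (F × F)} {k : ℕ}
    (hL : ∀ l ∈ L, k ≤ richness A l) (hk : 2 * A.card ^ 2 ≤ k * Fintype.card F) :
    L.card * k ^ 2 ≤ 4 * Fintype.card F * A.card ^ 2 := by
  have hF : (0 : ℝ) < Fintype.card F := by exact_mod_cast Fintype.card_pos
  have hdev (l : F × F) (hl : l ∈ L) : (Fintype.card F * k / 2 : ℝ) ^ 2 ≤
      (Fintype.card F * richness A l - A.card ^ 2 : ℝ) ^ 2 := by
    have hkl : (k : ℝ) ≤ richness A l := by exact_mod_cast hL l hl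
    have hkF : (2 * A.card ^ 2 : ℝ) ≤ k * Fintype.card F := by exact_mod_cast hk
    gcongr
    nlinarith
  have hsum : (L.card * (Fintype.card F * k / 2) ^ 2 : ℝ) ≤ Fintype.card F ^ 3 * A.card ^ 2 :=
    calc (L.card * (Fintype.card F * k / 2) ^ 2 : ℝ)
        = ∑ _l ∈ L, (Fintype.card F * k / 2 : ℝ) ^ 2 := by rw [Finset.sum_const, nsmul_eq_mul]
      _ ≤ ∑ l ∈ L, (Fintype.card F * richness A l - A.card ^ 2 : ℝ) ^ 2 :=
          Finset.sum_le_sum hdev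
      _ ≤ ∑ l : F × F, (Fintype.card F * richness A l - A.card ^ 2 : ℝ) ^ 2 :=
          Finset.sum_le_univ_sum_of_nonneg fun _ => sq_nonneg _
      _ ≤ Fintype.card F ^ 3 * A.card ^ 2 := sum_sq_card_mul_richness_sub_le A
  have hreal : (L.card * k ^ 2 : ℝ) ≤ 4 * Fintype.card F * A.card ^ 2 := by
    refine le_of_mul_le_mul_left ?_ (pow_pos hF 2)
    linarith
  exact_mod_cast hreal

end Moments

theorem card_mul_pow_four_le_zmod {p : ℕ} [Fact p.Prime] {A : Finset (ZMod p)}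
    {L : Finset (ZMod p × ZMod p)} {k : ℕ} (hk : 2 ≤ k) (hL : ∀ l ∈ L, k ≤ richness A l)
    (hkp : 2 * A.card ^ 2 ≤ k * p) : L.card * k ^ 4 ≤ 10 ^ 10 * A.card ^ 5 := by
  rcases lt_or_ge (A.card * L.card) (p ^ 2) with hsmall | hlarge
  · refine card_mul_pow_four_le hk hL fun n hn hle hzero => ?_
    have hpn : p ≤ n :=
      Nat.le_of_dvd (Nat.pos_of_ne_zero hn) ((ZMod.natCast_eq_zero_iff n p).1 hzero)
    exact absurd ((Nat.pow_le_pow_left hpn 2).trans hle) hsmall.not_ge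
  · rcases L.card.eq_zero_or_pos with hempty | hpos
    · simp [hempty]
    have hvar : L.card * k ^ 2 ≤ 4 * p * A.card ^ 2 := by
      simpa only [ZMod.card] using card_mul_sq_le hL (by rwa [ZMod.card])
    apply Nat.le_of_mul_le_mul_right _ hpos
    calc L.card * k ^ 4 * L.card = (L.card * k ^ 2) ^ 2 := by ring
      _ ≤ (4 * p * A.card ^ 2) ^ 2 := Nat.pow_le_pow_left hvar 2
      _ = 16 * p ^ 2 * A.card ^ 4 := by ring
      _ ≤ 16 * (A.card * L.card) * A.card ^ 4 := by gcongr
      _ = 16 * A.card ^ 5 * L.card := by ring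
      _ ≤ 10 ^ 10 * A.card ^ 5 * L.card := by gcongr; norm_num

section LayerCake

variable {α : Type*} {s : Finset α} {f : α → ℕ}

theorem sum_le_mul_card_add_sum_card_filter (s : Finset α) (f : α → ℕ) (Δ : ℕ) :
    ∑ x ∈ s, f x ≤ Δ * s.card + ∑ k ∈ Finset.Ioc Δ (s.sup f), (s.filter (k ≤ f ·)).card := by
  have hpoint (x : α) (hx : x ∈ s) :
      f x ≤ Δ + ∑ k ∈ Finset.Ioc Δ (s.sup f), if k ≤ f x then 1 else 0 := by
    have hsub : Finset.Ioc Δ (f x) ⊆ (Finset.Ioc Δ (s.sup f)).filter (· ≤ f x) := by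
      intro k hk
      rw [Finset.mem_Ioc] at hk
      rw [Finset.mem_filter, Finset.mem_Ioc]
      exact ⟨⟨hk.1, hk.2.trans (Finset.le_sup hx)⟩, hk.2⟩
    have hcard := Finset.card_le_card hsub
    rw [Nat.card_Ioc, Finset.card_filter] at hcard
    lia
  refine (Finset.sum_le_sum hpoint).trans_eq ?_
  rw [Finset.sum_add_distrib, Finset.sum_const, Finset.sum_comm, smul_eq_mul, mul_comm]
  simp only [Finset.card_filter]

theorem sum_le_mul_card_add_div {Δ : ℕ} (hΔ : Δ ≠ 0) {c : ℝ}
    (h : ∀ k : ℕ, Δ < k → ((s.filter (k ≤ f ·)).card * k ^ 2 : ℝ) ≤ c) :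
    (∑ x ∈ s, f x : ℝ) ≤ Δ * s.card + c / Δ := by
  have hc : 0 ≤ c := le_trans (by positivity) (h (Δ + 1) Δ.lt_succ_self)
  have htail : ∑ k ∈ Finset.Ioc Δ (s.sup f), ((k : ℝ) ^ 2)⁻¹ ≤ (Δ : ℝ)⁻¹ := by
    rcases le_or_gt Δ (s.sup f) with hle | hlt
    · exact (sum_Ioc_inv_sq_le_sub hΔ hle).trans (sub_le_self _ (by positivity))
    · rw [Finset.Ioc_eq_empty_of_le hlt.le, Finset.sum_empty]
      positivity
  calc (∑ x ∈ s, f x : ℝ)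
      ≤ Δ * s.card + ∑ k ∈ Finset.Ioc Δ (s.sup f), ((s.filter (k ≤ f ·)).card : ℝ) := by
        exact_mod_cast sum_le_mul_card_add_sum_card_filter s f Δ
    _ ≤ Δ * s.card + ∑ k ∈ Finset.Ioc Δ (s.sup f), c * ((k : ℝ) ^ 2)⁻¹ := by
        gcongr with k hk
        have hk' := (Finset.mem_Ioc.1 hk).1
        rw [← div_eq_mul_inv, le_div_iff₀ (pow_pos (Nat.cast_pos.2 (hΔ.bot_lt.trans hk')) 2)]
        exact h k hk'
    _ ≤ Δ * s.card + c / Δ := by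
        rw [← Finset.mul_sum, div_eq_mul_inv]
        gcongr

theorem sum_le_of_forall_card_filter_mul_sq_le {l M w c : ℝ} (hl : 0 < l) (hs : s.card = l ^ 2)
    (hM : 1 ≤ M) (hw : 0 ≤ w) (hc : 0 ≤ c)
    (h : ∀ k : ℕ, M ≤ k → ((s.filter (k ≤ f ·)).card * k ^ 2 : ℝ) ≤ c * w ^ 2) :
    (∑ x ∈ s, f x : ℝ) ≤ 2 * M * l ^ 2 + (1 + c) * (w * l) := by
  have hwl : 0 ≤ w / l := by positivity
  obtain ⟨Δ, hΔ⟩ : ∃ Δ, Δ = ⌈M + w / l⌉₊ := ⟨_, rfl⟩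
  have hle_Δ : M + w / l ≤ Δ := hΔ ▸ Nat.le_ceil _
  have hΔ_le : (Δ : ℝ) ≤ 2 * M + w / l := by
    have hceil := Nat.ceil_lt_add_one (show 0 ≤ M + w / l by linarith)
    rw [← hΔ] at hceil
    linarith
  have hΔpos : (0 : ℝ) < Δ := by linarith
  calc (∑ x ∈ s, f x : ℝ)
      ≤ Δ * s.card + c * w ^ 2 / Δ :=
        sum_le_mul_card_add_div (by exact_mod_cast hΔpos.ne') fun k hk =>
          h k (by have : (Δ : ℝ) < k := by exact_mod_cast hk
                  linarith)
    _ ≤ (2 * M + w / l) * l ^ 2 + c * (w * l) := by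
        rw [hs]
        gcongr
        rw [div_le_iff₀ hΔpos]
        have hwΔ : w ≤ Δ * l := (div_le_iff₀ hl).1 (by linarith)
        nlinarith [mul_le_mul_of_nonneg_left hwΔ (mul_nonneg hc hw)]
    _ = 2 * M * l ^ 2 + (1 + c) * (w * l) := by
        field_simp
        ring

end LayerCake

section Energy

variable {p : ℕ}

/-- The group quotient `l₁⁻¹ ∘ l₂` of a pair of lines. -/
def leftQuotient (π : (ZMod p × ZMod p) × ZMod p × ZMod p) : ZMod p × ZMod p :=
  acomp p (ainv p π.1) π.2

theorem inc_eq_card_filter (A B : Finset (ZMod p)) (L : Finset (ZMod p × ZMod p)) :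
    inc p A B L = ((A ×ˢ L).filter fun x => x.2.1 * x.1 + x.2.2 ∈ B).card := by
  have himage : {ql : (ZMod p × ZMod p) × ZMod p × ZMod p |
      ql.1.1 ∈ A ∧ ql.1.2 ∈ B ∧ ql.2 ∈ L ∧ ql.1.2 = ql.2.1 * ql.1.1 + ql.2.2} =
      (fun x : ZMod p × ZMod p × ZMod p => ((x.1, x.2.1 * x.1 + x.2.2), x.2)) ''
        ((A ×ˢ L).filter fun x => x.2.1 * x.1 + x.2.2 ∈ B) := by
    ext ⟨⟨a, b⟩, l⟩
    constructor
    · rintro ⟨ha, hb, hl, heq⟩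
      exact ⟨(a, l), by simp_all, by simp [heq.symm]⟩
    · rintro ⟨x, hx, ⟨⟩⟩
      simp_all
  have hinj : Function.Injective
      fun x : ZMod p × ZMod p × ZMod p => ((x.1, x.2.1 * x.1 + x.2.2), x.2) :=
    fun x y h => by simp_all [Prod.ext_iff]
  rw [inc, himage, Set.ncard_image_of_injective _ hinj, Set.ncard_coe_finset]

theorem affEnergy_eq_sum_card_filter (L : Finset (ZMod p × ZMod p)) :
    affEnergy p L = ∑ π ∈ L ×ˢ L,
      ((L ×ˢ L).filter (leftQuotient · = leftQuotient π)).card := by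
  have himage : {q : (ZMod p × ZMod p) × (ZMod p × ZMod p) × (ZMod p × ZMod p) × (ZMod p × ZMod p) |
      q.1 ∈ L ∧ q.2.1 ∈ L ∧ q.2.2.1 ∈ L ∧ q.2.2.2 ∈ L ∧
        acomp p (ainv p q.1) q.2.1 = acomp p (ainv p q.2.2.1) q.2.2.2} =
      Equiv.prodAssoc _ _ _ '' (((L ×ˢ L) ×ˢ L ×ˢ L).filter
        fun x => leftQuotient x.2 = leftQuotient x.1) := by
    rw [Equiv.image_eq_preimage_symm]
    ext ⟨l₁, l₂, l₁', l₂'⟩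
    simp [leftQuotient, and_assoc, eq_comm]
  rw [affEnergy, himage, Set.ncard_image_of_injective _ (Equiv.injective _), Set.ncard_coe_finset]
  simp only [Finset.card_filter, Finset.sum_product]

variable [Fact p.Prime]

theorem leftQuotient_apply_eq_iff {l₁ : ZMod p × ZMod p} (h : l₁.1 ≠ 0) (l₂ : ZMod p × ZMod p)
    (a a' : ZMod p) :
    (leftQuotient (l₁, l₂)).1 * a + (leftQuotient (l₁, l₂)).2 = a' ↔
      l₁.1 * a' + l₁.2 = l₂.1 * a + l₂.2 := by
  simp only [leftQuotient, acomp, ainv]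
  field_simp
  constructor <;> intro h <;> linear_combination -h

theorem sum_card_filter_eq_sum_richness (A : Finset (ZMod p)) {L : Finset (ZMod p × ZMod p)}
    (hL : ∀ l ∈ L, l.1 ≠ 0) :
    ∑ x ∈ A ×ˢ L, ((A ×ˢ L).filter fun y => y.2.1 * y.1 + y.2.2 = x.2.1 * x.1 + x.2.2).card =
      ∑ π ∈ L ×ˢ L, richness A (leftQuotient π) := by
  simp only [richness, Finset.card_filter, Finset.sum_product_right]
  refine Finset.sum_congr rfl fun l _ => ?_
  rw [Finset.sum_comm]
  refine Finset.sum_congr rfl fun l₁ hl₁ => Finset.sum_congr rfl fun a _ => ?_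
  simp only [← leftQuotient_apply_eq_iff (hL l₁ hl₁), Finset.sum_ite_eq]

theorem sq_inc_le_card_mul_sum_richness (A B : Finset (ZMod p)) {L : Finset (ZMod p × ZMod p)}
    (hL : ∀ l ∈ L, l.1 ≠ 0) :
    inc p A B L ^ 2 ≤ B.card * ∑ π ∈ L ×ˢ L, richness A (leftQuotient π) := by
  rw [inc_eq_card_filter, ← sum_card_filter_eq_sum_richness A hL]
  exact sq_card_filter_mem_le _ _ _

theorem sq_card_filter_richness_mul_le (A : Finset (ZMod p)) (L : Finset (ZMod p × ZMod p))
    {k : ℕ} (hk : 2 ≤ k) (hkp : 2 * A.card ^ 2 ≤ k * p) :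
    (((L ×ˢ L).filter fun π => k ≤ richness A (leftQuotient π)).card * k ^ 2) ^ 2 ≤
      10 ^ 10 * A.card ^ 5 * affEnergy p L := by
  obtain ⟨M, hM⟩ : ∃ M, M = Finset.univ.filter fun g : ZMod p × ZMod p => k ≤ richness A g :=
    ⟨_, rfl⟩
  have hcs : ((L ×ˢ L).filter fun π => k ≤ richness A (leftQuotient π)).card ^ 2 ≤
      M.card * affEnergy p L := by
    rw [affEnergy_eq_sum_card_filter]
    simpa only [hM, Finset.mem_filter, Finset.mem_univ, true_and] using
      sq_card_filter_mem_le (L ×ˢ L) M leftQuotient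
  have hrich : M.card * k ^ 4 ≤ 10 ^ 10 * A.card ^ 5 :=
    card_mul_pow_four_le_zmod hk (fun l hl => by simpa [hM] using hl) hkp
  calc (((L ×ˢ L).filter fun π => k ≤ richness A (leftQuotient π)).card * k ^ 2) ^ 2
      = ((L ×ˢ L).filter fun π => k ≤ richness A (leftQuotient π)).card ^ 2 * k ^ 4 := by ring
    _ ≤ M.card * affEnergy p L * k ^ 4 := by gcongr
    _ = M.card * k ^ 4 * affEnergy p L := by ring
    _ ≤ 10 ^ 10 * A.card ^ 5 * affEnergy p L := by gcongr

theorem sum_richness_leftQuotient_le (A : Finset (ZMod p)) (L : Finset (ZMod p × ZMod p)) {z : ℝ}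
    (hz : z ^ 8 = A.card ^ 5 * affEnergy p L) :
    (∑ π ∈ L ×ˢ L, richness A (leftQuotient π) : ℝ) ≤
      4 * max 1 (A.card ^ 2 / p : ℝ) * L.card ^ 2 + 100001 * (z ^ 2 * L.card) := by
  rcases L.eq_empty_or_nonempty with rfl | hne
  · simp
  have hp : (0 : ℝ) < p := by exact_mod_cast (Fact.out : p.Prime).pos
  obtain ⟨M, hM⟩ : ∃ M, M = max 1 (A.card ^ 2 / p : ℝ) := ⟨_, rfl⟩
  have hM₁ : 1 ≤ M := hM ▸ le_max_left _ _
  have hMp : (A.card ^ 2 : ℝ) ≤ M * p := (div_le_iff₀ hp).1 (hM ▸ le_max_right _ _)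
  have hlevel (k : ℕ) (hk : 2 * M ≤ k) :
      (((L ×ˢ L).filter fun π => k ≤ richness A (leftQuotient π)).card * k ^ 2 : ℝ) ≤
        10 ^ 5 * (z ^ 2) ^ 2 := by
    have hk₂ : 2 ≤ k := by exact_mod_cast (by linarith : (2 : ℝ) ≤ k)
    have hkp : 2 * A.card ^ 2 ≤ k * p := by
      exact_mod_cast (by nlinarith : (2 * A.card ^ 2 : ℝ) ≤ k * p)
    refine (sq_le_sq₀ (by positivity) (by positivity)).1 ?_
    calc _ ≤ (10 ^ 10 * A.card ^ 5 * affEnergy p L : ℝ) := by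
          exact_mod_cast sq_card_filter_richness_mul_le A L hk₂ hkp
      _ = 10 ^ 10 * z ^ 8 := by rw [hz]; ring
      _ = (10 ^ 5 * (z ^ 2) ^ 2) ^ 2 := by ring
  refine (sum_le_of_forall_card_filter_mul_sq_le (l := L.card) (M := 2 * M) (w := z ^ 2)
    (c := 10 ^ 5) (by exact_mod_cast hne.card_pos) ?_ (by linarith) (sq_nonneg z) (by norm_num)
    hlevel).trans_eq ?_
  · rw [Finset.card_product, sq, Nat.cast_mul]
  · rw [← hM]
    ring

theorem sq_inc_le (A B : Finset (ZMod p)) {L : Finset (ZMod p × ZMod p)}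
    (hL : ∀ l ∈ L, l.1 ≠ 0) {z : ℝ} (hz : z ^ 8 = A.card ^ 5 * affEnergy p L) :
    (inc p A B L ^ 2 : ℝ) ≤
      B.card * (4 * max 1 (A.card ^ 2 / p : ℝ) * L.card ^ 2 + 100001 * (z ^ 2 * L.card)) :=
  calc (inc p A B L ^ 2 : ℝ) ≤ B.card * ∑ π ∈ L ×ˢ L, (richness A (leftQuotient π) : ℝ) := by
        exact_mod_cast sq_inc_le_card_mul_sum_richness A B hL
    _ ≤ _ := by
        gcongr
        exact sum_richness_leftQuotient_le A L hz

end Energy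

theorem le_mul_max_of_sq_le {x a b c d C : ℝ} (ha : 0 ≤ a) (hb : 0 ≤ b) (hc : 0 ≤ c) (hd : 0 ≤ d)
    (hC : 0 ≤ C) (hcd : c + d ≤ C ^ 2) (h : x ^ 2 ≤ c * a ^ 2 + d * b ^ 2) :
    x ≤ C * max a b := by
  have hmax : 0 ≤ max a b := ha.trans (le_max_left a b)
  refine le_of_sq_le_sq ?_ (mul_nonneg hC hmax)
  calc x ^ 2 ≤ c * a ^ 2 + d * b ^ 2 := h
    _ ≤ c * max a b ^ 2 + d * max a b ^ 2 := by
        gcongr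
        exacts [le_max_left a b, le_max_right a b]
    _ = (c + d) * max a b ^ 2 := by ring
    _ ≤ C ^ 2 * max a b ^ 2 := by gcongr
    _ = (C * max a b) ^ 2 := by ring

theorem sq_rpow_half {x : ℝ} (hx : 0 ≤ x) : (x ^ ((1 : ℝ) / 2)) ^ 2 = x := by
  rw [← Real.sqrt_eq_rpow, Real.sq_sqrt hx]

end EnergyIncidence

/-- **Theorem 1.9 over F_p** (energy–incidence bound): there is an absolute constant `C`
such that for every prime `p`, all finite `A, B ⊆ F_p` and every finite set `L` of lines
`y = ax + b` with `a ≠ 0`,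
`I(A×B, L) ≤ C·max{|B|^{1/2}|L|·(max{1,|A|²/p})^{1/2}, |B|^{1/2}|A|^{5/8}·E(L)^{1/8}·|L|^{1/2}}`. -/
theorem energy_incidence_Fp :
    ∃ C : ℝ, 0 < C ∧
      ∀ (p : ℕ), p.Prime →
        ∀ (A B : Finset (ZMod p)) (L : Finset (ZMod p × ZMod p)), (∀ l ∈ L, l.1 ≠ 0) →
          (inc p A B L : ℝ) ≤
            C * max
              ((B.card : ℝ) ^ ((1 : ℝ) / 2) * (L.card : ℝ) *
                (max 1 ((A.card : ℝ) ^ 2 / (p : ℝ))) ^ ((1 : ℝ) / 2))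
              ((B.card : ℝ) ^ ((1 : ℝ) / 2) * (A.card : ℝ) ^ ((5 : ℝ) / 8) *
                (affEnergy p L : ℝ) ^ ((1 : ℝ) / 8) * (L.card : ℝ) ^ ((1 : ℝ) / 2)) := by
  refine ⟨1000, by norm_num, fun p hp A B L hL => ?_⟩
  have : Fact p.Prime := ⟨hp⟩
  have hz : ((A.card : ℝ) ^ ((5 : ℝ) / 8) * (affEnergy p L : ℝ) ^ ((1 : ℝ) / 8)) ^ 8 =
      A.card ^ 5 * affEnergy p L := by
    rw [mul_pow, ← Real.rpow_mul_natCast (by positivity), ← Real.rpow_mul_natCast (by positivity)]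
    norm_num
  refine EnergyIncidence.le_mul_max_of_sq_le (c := 4) (d := 100001) (by positivity)
    (by positivity) (by norm_num) (by norm_num) (by norm_num) (by norm_num)
    ((EnergyIncidence.sq_inc_le A B hL hz).trans_eq ?_)
  have hM : 0 ≤ max 1 ((A.card : ℝ) ^ 2 / p) := by positivity
  simp only [mul_pow, EnergyIncidence.sq_rpow_half hM,
    EnergyIncidence.sq_rpow_half (Nat.cast_nonneg _)]
  ring
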